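/- arXiv:2506.09019 — 3 statements merged into one kernel-verified Lean document; each statement's English description precedes it below -/
import Mathlib

section
/- Let k be a field of characteristic 2, let m ≥ 1, set d = 2m − 1, and let e ≥ 0. Then (2^m − 1) · dim_k ( k[x_0,…,x_d] / (x_0^{2^e},…,x_d^{2^e}, x_0x_1 + x_2x_3 + ⋯ + x_{d−1}x_d) ) = 2^m · 2^{d·e} − 2^{(m−1)·e}. In particular the Hilbert–Kunz function of the odd-dimensional A_1 singularity in characteristic 2 is HK_e(R_{2,d}) = (2^m/(2^m−1))·2^{de} − (2^{m−1})^e/(2^m−1). -/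
section

open MvPolynomial

/-- The Hilbert–Kunz function of the hypersurface defined by `f` in `n` variables,
in characteristic `p`, at level `e`:
`dim_k k[x_0,…,x_{n-1}] / (x_0^{p^e},…,x_{n-1}^{p^e}, f)`. -/
noncomputable def HKfun (k : Type*) [Field k] (n p e : ℕ)
    (f : MvPolynomial (Fin n) k) : ℕ :=
  Module.finrank k
    (MvPolynomial (Fin n) k ⧸
      Ideal.span
        (Set.range (fun i : Fin n => (X i : MvPolynomial (Fin n) k) ^ p ^ e) ∪ {f}))



end

universe u

namespace HKA1

open Polynomial in
lemma adj_finite (k B : Type u) [Field k] [CommRing B] [Algebra k B] [Module.Finite k B] (a : ℕ) :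
    Module.Finite k (AdjoinRoot (X ^ a : B[X])) := by
  have := (Polynomial.monic_X_pow (R := B) a).finite_adjoinRoot
  exact Module.Finite.trans B _

open Polynomial in
lemma adj_rank (k B : Type u) [Field k] [CommRing B] [Algebra k B] [Module.Finite k B] (a : ℕ) :
    Module.finrank k (AdjoinRoot (X ^ a : B[X])) = a * Module.finrank k B := by
  rcases subsingleton_or_nontrivial B with h | h
  · have : Subsingleton (AdjoinRoot (X ^ a : B[X])) := by
      apply subsingleton_of_zero_eq_one
      rw [← map_zero (AdjoinRoot.of _), ← map_one (AdjoinRoot.of _), Subsingleton.elim (0:B) 1]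
    rw [Module.finrank_zero_of_subsingleton, Module.finrank_zero_of_subsingleton, mul_zero]
  · have := (Polynomial.monic_X_pow (R := B) a).free_adjoinRoot
    rw [← Module.finrank_mul_finrank k B, (AdjoinRoot.powerBasis' (Polynomial.monic_X_pow (R := B) a)).finrank,
      AdjoinRoot.powerBasis'_dim, Polynomial.natDegree_X_pow, mul_comm]

structure IsTens (k : Type u) [Field k] {B C : Type u} [CommRing B] [CommRing C] [Algebra k B]
    [Algebra k C] (a : ℕ) (ι : B →ₐ[k] C) (x y : C) : Prop where
  hx : x ^ a = 0
  hy : y ^ a = 0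
  ind : ∀ P : C → Prop, (∀ u v, P u → P v → P (u + v)) →
    (∀ b i j, P (ι b * x ^ i * y ^ j)) → ∀ c, P c
  lift : ∀ (D : Type u) [CommRing D] [Algebra k D] (φ : B →ₐ[k] D) (c d : D), c ^ a = 0 → d ^ a = 0 →
    ∃ Φ : C →ₐ[k] D, (∀ b, Φ (ι b) = φ b) ∧ Φ x = c ∧ Φ y = d
  fin : Module.Finite k B → Module.Finite k C
  rank : Module.Finite k B → Module.finrank k C = a * a * Module.finrank k B

structure Obj (k : Type u) [Field k] where
  R : Type u
  [cr : CommRing R]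
  [alg : Algebra k R]
  t : R

attribute [instance] Obj.cr Obj.alg

open Polynomial in
abbrev Adj (B : Type u) [CommRing B] (a : ℕ) : Type u := AdjoinRoot (X ^ a : B[X])

section
variable {k : Type u} [Field k]

noncomputable def tens (a : ℕ) (B : Obj k) : Obj k where
  R := Adj (Adj B.R a) a
  t := AdjoinRoot.root _ * AdjoinRoot.of _ (AdjoinRoot.root _) + AdjoinRoot.of _ (AdjoinRoot.of _ B.t)

open Polynomial in
lemma adj_ind {B : Type u} [CommRing B] (a : ℕ) (P : Adj B a → Prop)
    (h1 : ∀ u v, P u → P v → P (u + v))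
    (h2 : ∀ b i, P (AdjoinRoot.of _ b * AdjoinRoot.root _ ^ i)) (c) : P c := by
  induction c using AdjoinRoot.induction_on with
  | ih p =>
    induction p using Polynomial.induction_on' with
    | add p q hp hq => rw [map_add]; exact h1 _ _ hp hq
    | monomial n b =>
      rw [← Polynomial.C_mul_X_pow_eq_monomial, map_mul, map_pow, AdjoinRoot.mk_X, AdjoinRoot.mk_C]
      exact h2 _ _

open Polynomial in
lemma root_pow {B : Type u} [CommRing B] (a : ℕ) :
    (AdjoinRoot.root (X ^ a : B[X])) ^ a = 0 := by
  rw [← AdjoinRoot.mk_X, ← map_pow, AdjoinRoot.mk_self]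

lemma adj_spec (a : ℕ) (B : Type u) [CommRing B] [Algebra k B] :
    IsTens k a ((AdjoinRoot.ofAlgHom k _).comp (AdjoinRoot.ofAlgHom k _) : B →ₐ[k] Adj (Adj B a) a)
      (AdjoinRoot.root _) (AdjoinRoot.of _ (AdjoinRoot.root _)) := by
  refine ⟨?_, ?_, ?_, ?_, ?_, ?_⟩
  · exact root_pow a
  · rw [← map_pow, root_pow, map_zero]
  · intro P h1 h2 c
    refine adj_ind a P h1 (fun b i => ?_) c
    refine adj_ind a (fun b => P (AdjoinRoot.of _ b * AdjoinRoot.root _ ^ i)) ?_ ?_ b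
    · intro u v hu hv
      simp only [map_add, add_mul]
      exact h1 _ _ hu hv
    · intro b j
      have := h2 b i j
      simp only [map_mul, map_pow]
      convert this using 1
      simp only [AlgHom.comp_apply, AdjoinRoot.coe_ofAlgHom]
      ring
  · intro D _ _ φ c d hc hd
    have h1 : Polynomial.eval₂ (φ : B →+* D) d (Polynomial.X ^ a) = 0 := by simp [hd]
    have h2 : Polynomial.eval₂ ((AdjoinRoot.liftAlgHom _ φ d h1 : Adj B a →ₐ[k] D) : Adj B a →+* D) c
      (Polynomial.X ^ a) = 0 := by simp [hc]
    refine ⟨AdjoinRoot.liftAlgHom _ (AdjoinRoot.liftAlgHom _ φ d h1) c h2, ?_, ?_, ?_⟩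
    · intro b
      simp only [AlgHom.comp_apply, AdjoinRoot.coe_ofAlgHom]
      rw [AdjoinRoot.liftAlgHom_of, AdjoinRoot.liftAlgHom_of]
    · rw [AdjoinRoot.liftAlgHom_root]
    · rw [AdjoinRoot.liftAlgHom_of, AdjoinRoot.liftAlgHom_root]
  · intro _
    have := adj_finite k B a
    exact adj_finite k (Adj B a) a
  · intro _
    have := adj_finite k B a
    have h := adj_rank k (Adj B a) a
    rw [adj_rank k B a, ← mul_assoc] at h
    exact h

lemma tens_spec (a : ℕ) (B : Obj k) : ∃ (ι : B.R →ₐ[k] (tens a B).R) (x y : (tens a B).R),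
    IsTens k a ι x y ∧ (tens a B).t = x * y + ι B.t :=
  ⟨_, _, _, adj_spec (k := k) a B.R, rfl⟩

lemma add_pow_two_pow {R : Type*} [CommRing R] (h : (2 : R) = 0) (x y : R) (s : ℕ) :
    (x + y) ^ 2 ^ s = x ^ 2 ^ s + y ^ 2 ^ s := by
  induction s with
  | zero => simp
  | succ s ih =>
    rw [pow_succ, pow_mul, ih, pow_mul, pow_mul]
    linear_combination (x ^ 2 ^ s * y ^ 2 ^ s) * h

open Polynomial in
lemma pow_pred {B : Type u} [CommRing B] (h2 : (2 : B) = 0) (t : B) (s : ℕ) :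
    (X + C t) ^ (2 ^ s - 1) = ∑ i ∈ Finset.range (2 ^ s), (X : B[X]) ^ i * C t ^ (2 ^ s - 1 - i) := by
  have h2' : (2 : B[X]) = 0 := by
    rw [← map_ofNat (C : B →+* B[X]) 2, h2, map_zero]
  have h := (Commute.all (X : B[X]) (C t)).mul_geom_sum₂ (2 ^ s)
  have e1 : (X - C t : B[X]) = X + C t := by linear_combination (-C t) * h2'
  have e2 : (X ^ 2 ^ s - C t ^ 2 ^ s : B[X]) = (X + C t) * (X + C t) ^ (2 ^ s - 1) := by
    rw [← pow_succ', Nat.sub_add_cancel Nat.one_le_two_pow, add_pow_two_pow h2']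
    linear_combination (- C t ^ 2 ^ s) * h2'
  rw [e1, e2] at h
  exact ((Polynomial.monic_X_add_C t).isRegular.left h).symm

open Polynomial in
/-- kernel of evaluation -/
lemma exists_div {B : Type u} [CommRing B] (h2 : (2 : B) = 0) (t : B) (p : B[X]) :
    ∃ g, p = C (p.eval t) + (X + C t) * g := by
  have h2' : (2 : B[X]) = 0 := by
    rw [← map_ofNat (C : B →+* B[X]) 2, h2, map_zero]
  obtain ⟨g, hg⟩ := Polynomial.X_sub_C_dvd_sub_C_eval (a := t) (p := p)
  refine ⟨g, ?_⟩
  linear_combination hg - C t * g * h2'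

open Polynomial in
lemma chain_range {B : Type u} [CommRing B] (h2 : (2 : B) = 0) (t : B) (a : ℕ) (p : B[X]) :
    (∃ g, X ^ a ∣ p - (X + C t) * g) ↔ t ^ a ∣ p.eval t := by
  have h2' : (2 : B[X]) = 0 := by
    rw [← map_ofNat (C : B →+* B[X]) 2, h2, map_zero]
  constructor
  · rintro ⟨g, r, hr⟩
    refine ⟨r.eval t, ?_⟩
    have := congrArg (Polynomial.eval t) hr
    simp at this
    linear_combination this + t * g.eval t * h2
  · rintro ⟨b, hb⟩
    obtain ⟨g, hg⟩ := exists_div h2 t (p - X ^ a * C b)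
    refine ⟨g, C b, ?_⟩
    have : (p - X ^ a * C b).eval t = 0 := by
      rw [eval_sub, eval_mul, eval_pow, eval_X, eval_C, hb, sub_self]
    rw [this] at hg
    simp at hg
    linear_combination hg

open Polynomial in
lemma chain_ker {B : Type u} [CommRing B] (h2 : (2 : B) = 0) (t : B) (a s : ℕ) (ht : t ^ 2 ^ s = 0)
    (ha : a ≤ 2 ^ s) (p : B[X]) :
    X ^ a ∣ (X + C t) ^ (2 ^ s - 1) * p ↔ t ^ (2 ^ s - a) * p.eval t = 0 := by
  have h2' : (2 : B[X]) = 0 := by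
    rw [← map_ofNat (C : B →+* B[X]) 2, h2, map_zero]
  obtain ⟨g, hg⟩ := exists_div h2 t p
  have e : (X + C t) ^ (2 ^ s - 1) * p = C (p.eval t) * (X + C t) ^ (2 ^ s - 1) + X ^ 2 ^ s * g := by
    conv_lhs => rw [hg]
    rw [mul_add, ← mul_assoc, ← pow_succ, Nat.sub_add_cancel Nat.one_le_two_pow, add_pow_two_pow h2',
      show (C t : B[X]) ^ 2 ^ s = 0 by rw [← C_pow, ht, C_0]]
    ring
  rw [e, dvd_add_left (Dvd.dvd.mul_right (pow_dvd_pow _ ha) _), Polynomial.X_pow_dvd_iff, pow_pred h2]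
  have co : ∀ d < 2 ^ s, (C (p.eval t) * ∑ i ∈ Finset.range (2 ^ s), (X : B[X]) ^ i * C t ^ (2 ^ s - 1 - i)).coeff d
      = t ^ (2 ^ s - 1 - d) * p.eval t := by
    intro d hd
    rw [Polynomial.coeff_C_mul, Polynomial.finsetSum_coeff, Finset.sum_eq_single d]
    · rw [← C_pow, Polynomial.coeff_mul_C]; simp [mul_comm]
    · intro i _ hi
      rw [← C_pow, Polynomial.coeff_mul_C, Polynomial.coeff_X_pow, if_neg (Ne.symm hi), zero_mul]
    · intro h; simp at h; omega
  constructor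
  · intro h
    rcases Nat.eq_zero_or_pos a with rfl | h0
    · simp [ht]
    have := h (a - 1) (by omega)
    rw [co _ (by omega)] at this
    rwa [show 2 ^ s - 1 - (a - 1) = 2 ^ s - a by omega] at this
  · intro h d hd
    rw [co _ (by omega), show 2 ^ s - 1 - d = (a - 1 - d) + (2 ^ s - a) by omega, pow_add, mul_assoc, h, mul_zero]

end

section core
variable {k : Type u} [Field k]

abbrev W (a : ℕ) : Type := Fin a ⊕ Fin (a - 1)

def len (a : ℕ) : W a → ℕ := Sum.elim (fun i => a - i) (fun j => a - 1 - j)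

lemma len_le (a : ℕ) (w : W a) : len a w ≤ a := by
  rcases w with i | j <;> simp [len]; omega

lemma sum_len (a : ℕ) {M : Type*} [AddCommMonoid M] (g : ℕ → M) :
    ∑ w, g (len a w) = ∑ i ∈ Finset.range a, g (i + 1) + ∑ i ∈ Finset.range (a - 1), g (i + 1) := by
  rw [Fintype.sum_sum_type]
  congr 1
  · simp only [len, Sum.elim_inl]
    rw [Fin.sum_univ_eq_sum_range (fun i => g (a - i)) a, ← Finset.sum_range_reflect]
    refine Finset.sum_congr rfl fun i hi => ?_
    rw [Finset.mem_range] at hi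
    congr 1; omega
  · simp only [len, Sum.elim_inr]
    rw [Fin.sum_univ_eq_sum_range (fun i => g (a - 1 - i)) (a - 1), ← Finset.sum_range_reflect]
    refine Finset.sum_congr rfl fun i hi => ?_
    rw [Finset.mem_range] at hi
    congr 1; omega

lemma sum_len_id (a : ℕ) : ∑ w, len a w = a * a := by
  rw [sum_len a (fun i => i)]
  rcases a with _ | a
  · simp
  · simp only [Nat.add_sub_cancel]
    induction a with
    | zero => simp
    | succ a ih =>
      rw [Finset.sum_range_succ (fun i => i + 1) (a + 1)]
      rw [Finset.sum_range_succ (fun i => i + 1) a] at ih ⊢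
      nlinarith

variable {B C : Type u} [CommRing B] [CommRing C] [Algebra k B] [Algebra k C]

def mon (a : ℕ) (x y : C) : W a → C := Sum.elim (fun i => x ^ (i : ℕ)) (fun j => y ^ ((j : ℕ) + 1))

lemma mon_mul (a : ℕ) (x y : C) (hx : x ^ a = 0) (hy : y ^ a = 0) (w : W a) :
    mon a x y w * (x * y) ^ len a w = 0 := by
  rcases w with i | j
  · simp only [mon, len, Sum.elim_inl]
    rw [mul_pow, ← mul_assoc, ← pow_add, show (i : ℕ) + (a - i) = a by omega, hx, zero_mul]
  · simp only [mon, len, Sum.elim_inr]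
    rw [mul_pow, mul_left_comm, ← pow_add, show (j : ℕ) + 1 + (a - 1 - j) = a by omega, hy, mul_zero]

open Polynomial in
noncomputable def Psi (a : ℕ) (ι : B →ₐ[k] C) (x y : C) : (W a → B[X]) →ₗ[k] C :=
  ∑ w, (LinearMap.mulLeft k (mon a x y w)) ∘ₗ
    (Polynomial.eval₂AlgHom ι (x * y) (fun _ => Commute.all _ _)).toLinearMap ∘ₗ LinearMap.proj w

open Polynomial in
lemma Psi_apply (a : ℕ) (ι : B →ₐ[k] C) (x y : C) (p : W a → B[X]) :
    Psi a ι x y p = ∑ w, mon a x y w * (p w).eval₂ (ι : B →+* C) (x * y) := by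
  rw [Psi, LinearMap.sum_apply]
  rfl

open Polynomial in
lemma Psi_mul (a : ℕ) (ι : B →ₐ[k] C) (x y : C) (p : W a → B[X]) (r : B[X]) :
    Psi a ι x y (fun w => r * p w) = r.eval₂ (ι : B →+* C) (x * y) * Psi a ι x y p := by
  rw [Psi_apply, Psi_apply, Finset.mul_sum]
  refine Finset.sum_congr rfl fun w _ => ?_
  rw [Polynomial.eval₂_mul]; ring

open Polynomial in
lemma Psi_surj {a : ℕ} {ι : B →ₐ[k] C} {x y : C} (h : IsTens k a ι x y) :
    Function.Surjective (Psi a ι x y) := by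
  intro c
  refine h.ind (fun c => ∃ p, Psi a ι x y p = c) ?_ ?_ c
  · rintro u v ⟨p, rfl⟩ ⟨q, rfl⟩
    exact ⟨p + q, map_add _ _ _⟩
  · intro b i j
    by_cases hi : a ≤ i
    · refine ⟨0, ?_⟩
      rw [map_zero, ← Nat.sub_add_cancel hi, pow_add, h.hx]; simp
    by_cases hj : a ≤ j
    · refine ⟨0, ?_⟩
      rw [map_zero, ← Nat.sub_add_cancel hj, pow_add, h.hy]; simp
    push Not at hi hj
    classical
    rcases le_or_gt j i with hji | hji
    · refine ⟨Pi.single (Sum.inl ⟨i - j, by omega⟩) (monomial j b), ?_⟩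
      rw [Psi_apply, Finset.sum_eq_single (Sum.inl ⟨i - j, by omega⟩)]
      · rw [Pi.single_eq_same, Polynomial.eval₂_monomial]
        simp only [mon, Sum.elim_inl]
        conv_rhs => rw [← Nat.sub_add_cancel hji, pow_add]
        simp only [RingHom.coe_coe]
        ring
      · intro w _ hw
        rw [Pi.single_eq_of_ne hw]; simp
      · simp
    · refine ⟨Pi.single (Sum.inr ⟨j - i - 1, by omega⟩) (monomial i b), ?_⟩
      rw [Psi_apply, Finset.sum_eq_single (Sum.inr ⟨j - i - 1, by omega⟩)]
      · rw [Pi.single_eq_same, Polynomial.eval₂_monomial]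
        simp only [mon, Sum.elim_inr]
        rw [show j - i - 1 + 1 = j - i by omega]
        conv_rhs => rw [← Nat.sub_add_cancel hji.le, pow_add y]
        simp only [RingHom.coe_coe]
        ring
      · intro w _ hw
        rw [Pi.single_eq_of_ne hw]; simp
      · simp

open Polynomial in
lemma Psi_ker [Module.Finite k B] {a : ℕ} {ι : B →ₐ[k] C} {x y : C} (h : IsTens k a ι x y)
    (p : W a → B[X]) : Psi a ι x y p = 0 ↔ ∀ w, X ^ len a w ∣ p w := by
  let S : (w : W a) → Submodule k B[X] := fun w =>
    (Ideal.span {(X ^ len a w : B[X])}).restrictScalars k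
  let K : Submodule k (W a → B[X]) := Submodule.pi Set.univ S
  have memK : ∀ p, p ∈ K ↔ ∀ w, X ^ len a w ∣ p w := by
    intro p
    simp [K, S, Submodule.mem_pi, Ideal.mem_span_singleton]
  have hle : K ≤ LinearMap.ker (Psi a ι x y) := by
    intro p hp
    rw [memK] at hp
    rw [LinearMap.mem_ker, Psi_apply]
    refine Finset.sum_eq_zero fun w _ => ?_
    obtain ⟨q, hq⟩ := hp w
    rw [hq, Polynomial.eval₂_mul, Polynomial.eval₂_X_pow, ← mul_assoc, mon_mul a x y h.hx h.hy, zero_mul]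
  have hf : ∀ w, Module.Finite k (B[X] ⧸ S w) := fun w => adj_finite k B (len a w)
  have hr : ∀ w, Module.finrank k (B[X] ⧸ S w) = len a w * Module.finrank k B :=
    fun w => adj_rank k B (len a w)
  let e : ((W a → B[X]) ⧸ K) ≃ₗ[k] ((w : W a) → B[X] ⧸ S w) := Submodule.quotientPi S
  have hfK : Module.Finite k ((W a → B[X]) ⧸ K) := Module.Finite.equiv e.symm
  have hrK : Module.finrank k ((W a → B[X]) ⧸ K) = Module.finrank k C := by
    rw [e.finrank_eq, Module.finrank_pi_fintype, h.rank inferInstance, ← sum_len_id, Finset.sum_mul]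
    exact Finset.sum_congr rfl fun w _ => hr w
  have := h.fin inferInstance
  let L : ((W a → B[X]) ⧸ K) →ₗ[k] C := K.liftQ (Psi a ι x y) hle
  have hLs : Function.Surjective L := by
    intro c
    obtain ⟨p, hp⟩ := Psi_surj h c
    exact ⟨K.mkQ p, hp⟩
  have hLi := (LinearMap.injective_iff_surjective_of_finrank_eq_finrank hrK).2 hLs
  constructor
  · intro hp
    rw [← memK, ← Submodule.Quotient.mk_eq_zero]
    apply hLi
    rw [map_zero]
    exact hp
  · intro hp
    exact hle ((memK p).2 hp)

variable (k) in
noncomputable def rk (t : B) (j : ℕ) : ℕ := Module.finrank k (LinearMap.range (LinearMap.mulLeft k (t ^ j)))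

/-- two surjections with the same kernel have targets of equal rank -/
lemma finrank_eq_of_ker {V M N : Type*} [AddCommGroup V] [AddCommGroup M] [AddCommGroup N]
    [Module k V] [Module k M] [Module k N] (f : V →ₗ[k] M) (g : V →ₗ[k] N)
    (h : ∀ v, f v = 0 ↔ g v = 0) :
    Module.finrank k (LinearMap.range f) = Module.finrank k (LinearMap.range g) := by
  have : LinearMap.ker f = LinearMap.ker g := by
    ext v; exact h v
  rw [← f.quotKerEquivRange.finrank_eq, ← g.quotKerEquivRange.finrank_eq, this]

lemma finrank_quot [Module.Finite k B] (t : B) (j : ℕ) :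
    Module.finrank k (B ⧸ LinearMap.range (LinearMap.mulLeft k (t ^ j))) + rk k t j = Module.finrank k B :=
  Submodule.finrank_quotient_add_finrank _

lemma range_pi {ι : Type*} [Fintype ι] {M N : ι → Type*} [∀ i, AddCommGroup (M i)] [∀ i, Module k (M i)]
    [∀ i, AddCommGroup (N i)] [∀ i, Module k (N i)] [∀ i, Module.Finite k (N i)]
    (f : ∀ i, M i →ₗ[k] N i) :
    Module.finrank k (LinearMap.range (LinearMap.pi (fun i => f i ∘ₗ LinearMap.proj i))) =
      ∑ i, Module.finrank k (LinearMap.range (f i)) := by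
  rw [← Module.finrank_pi_fintype]
  let g : ((i : ι) → M i) →ₗ[k] ((i : ι) → LinearMap.range (f i)) :=
    LinearMap.pi (fun i => (f i).rangeRestrict ∘ₗ LinearMap.proj i)
  have hg : LinearMap.range g = ⊤ := by
    rw [LinearMap.range_eq_top]
    intro v
    choose u hu using fun i => (f i).surjective_rangeRestrict (v i)
    exact ⟨u, funext hu⟩
  rw [finrank_eq_of_ker _ g, hg, finrank_top]
  intro v
  constructor
  · intro h; ext i; exact congrFun h i
  · intro h; ext i; exact congrArg Subtype.val (congrFun h i)

open Polynomial in
lemma rk_top [Module.Finite k B] (h2 : (2 : B) = 0) {a : ℕ} {ι : B →ₐ[k] C} {x y : C}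
    (h : IsTens k a ι x y) (t : B) (s : ℕ) (ht : t ^ 2 ^ s = 0) (ha : a ≤ 2 ^ s) :
    rk k (x * y + ι t) (2 ^ s - 1) = ∑ w, rk k t (2 ^ s - len a w) := by
  have e1 : rk k (x * y + ι t) (2 ^ s - 1) = Module.finrank k (LinearMap.range
      (LinearMap.mulLeft k ((x * y + ι t) ^ (2 ^ s - 1)) ∘ₗ Psi a ι x y)) := by
    rw [LinearMap.range_comp_of_range_eq_top _ (LinearMap.range_eq_top.2 (Psi_surj h))]; rfl
  let ev : B[X] →ₗ[k] B := (Polynomial.aeval t).toLinearMap.restrictScalars k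
  have evs : LinearMap.range ev = ⊤ := LinearMap.range_eq_top.2 fun b => ⟨Polynomial.C b, by simp [ev]⟩
  let g : (w : W a) → B[X] →ₗ[k] B := fun w => LinearMap.mulLeft k (t ^ (2 ^ s - len a w)) ∘ₗ ev
  have e2 : ∀ w, rk k t (2 ^ s - len a w) = Module.finrank k (LinearMap.range (g w)) := by
    intro w
    rw [LinearMap.range_comp_of_range_eq_top _ evs]; rfl
  rw [e1, Finset.sum_congr rfl fun w _ => e2 w, ← range_pi g]
  apply finrank_eq_of_ker
  intro p
  have e3 : (LinearMap.mulLeft k ((x * y + ι t) ^ (2 ^ s - 1)) ∘ₗ Psi a ι x y) p =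
      Psi a ι x y (fun w => (X + Polynomial.C t) ^ (2 ^ s - 1) * p w) := by
    rw [Psi_mul]; simp [Polynomial.eval₂_pow]
  rw [e3, Psi_ker h, funext_iff]
  refine forall_congr' fun w => ?_
  rw [chain_ker h2 t _ s ht ((len_le a w).trans ha)]
  simp [g, ev, Polynomial.coe_aeval_eq_eval]

open Polynomial in
lemma rk_one [Module.Finite k B] (h2 : (2 : B) = 0) {a : ℕ} {ι : B →ₐ[k] C} {x y : C}
    (h : IsTens k a ι x y) (t : B) :
    (Module.finrank k C : ℤ) - rk k (x * y + ι t) 1 = ∑ w, ((Module.finrank k B : ℤ) - rk k t (len a w)) := by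
  have := h.fin inferInstance
  have q1 := finrank_quot (k := k) (x * y + ι t) 1
  have q2 := fun w => finrank_quot (k := k) t (len a w)
  have e0 : ∀ w, ((Module.finrank k B : ℤ) - rk k t (len a w)) =
    (Module.finrank k (B ⧸ LinearMap.range (LinearMap.mulLeft k (t ^ len a w))) : ℕ) := by
    intro w; rw [← q2 w]; push_cast; ring
  rw [Finset.sum_congr rfl fun w _ => e0 w, ← q1]
  push_cast
  rw [add_sub_cancel_right, ← Nat.cast_sum, Nat.cast_inj]
  let ev : B[X] →ₗ[k] B := (Polynomial.aeval t).toLinearMap.restrictScalars k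
  have evs : Function.Surjective ev := fun b => ⟨Polynomial.C b, by simp [ev]⟩
  let g : (w : W a) → B[X] →ₗ[k] (B ⧸ LinearMap.range (LinearMap.mulLeft k (t ^ len a w))) :=
    fun w => Submodule.mkQ _ ∘ₗ ev
  have e2 : ∀ w, Module.finrank k (B ⧸ LinearMap.range (LinearMap.mulLeft k (t ^ len a w))) =
      Module.finrank k (LinearMap.range (g w)) := by
    intro w
    have : Function.Surjective (g w) := (Submodule.mkQ_surjective _).comp evs
    rw [LinearMap.range_eq_top.2 this, finrank_top]
  let f := (LinearMap.range (LinearMap.mulLeft k ((x * y + ι t) ^ 1))).mkQ ∘ₗ Psi a ι x y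
  have e1 : Module.finrank k (C ⧸ LinearMap.range (LinearMap.mulLeft k ((x * y + ι t) ^ 1))) =
      Module.finrank k (LinearMap.range f) := by
    have : Function.Surjective f := (Submodule.mkQ_surjective _).comp (Psi_surj h)
    rw [LinearMap.range_eq_top.2 this, finrank_top]
  rw [e1, Finset.sum_congr rfl fun w _ => e2 w, ← range_pi g]
  apply finrank_eq_of_ker
  intro p
  have e3 : f p = 0 ↔ ∃ g : W a → B[X], ∀ w, X ^ len a w ∣ p w - (X + Polynomial.C t) * g w := by
    simp only [f, LinearMap.comp_apply, Submodule.mkQ_apply, Submodule.Quotient.mk_eq_zero,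
      LinearMap.mem_range]
    have key : ∀ q : W a → B[X], Psi a ι x y (fun w => p w - (X + Polynomial.C t) * q w) =
        Psi a ι x y p - (x * y + ι t) * Psi a ι x y q := by
      intro q
      have := Psi_mul a ι x y q (X + Polynomial.C t)
      rw [show (fun w => p w - (X + Polynomial.C t) * q w) = p - fun w => (X + Polynomial.C t) * q w from rfl,
        map_sub, this]
      simp
    constructor
    · rintro ⟨c, hc⟩
      obtain ⟨q, rfl⟩ := Psi_surj h c
      refine ⟨q, (Psi_ker h _).1 ?_⟩
      rw [key, ← hc]; simp
    · rintro ⟨q, hq⟩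
      refine ⟨Psi a ι x y q, ?_⟩
      have := (Psi_ker h _).2 hq
      rw [key] at this
      simp only [pow_one, LinearMap.mulLeft_apply]
      linear_combination -this
  rw [e3, ← Classical.skolem (p := fun w g => X ^ len a w ∣ p w - (X + Polynomial.C t) * g), funext_iff]
  refine forall_congr' fun w => ?_
  rw [chain_range h2]
  simp only [g, ev, LinearMap.pi_apply, LinearMap.comp_apply, Submodule.mkQ_apply, Pi.zero_apply,
    Submodule.Quotient.mk_eq_zero, LinearMap.mem_range, LinearMap.proj_apply]
  simp [dvd_def, eq_comm, Polynomial.coe_aeval_eq_eval]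

end core

section iso
variable {k : Type u} [Field k]

def Iso (B B' : Obj k) : Prop := ∃ e : B.R ≃ₐ[k] B'.R, e B.t = B'.t

lemma Iso.trans {A B C : Obj k} (h : Iso A B) (h' : Iso B C) : Iso A C := by
  obtain ⟨e, he⟩ := h
  obtain ⟨f, hf⟩ := h'
  exact ⟨e.trans f, by simp [he, hf]⟩

lemma Iso.refl (A : Obj k) : Iso A A := ⟨AlgEquiv.refl, rfl⟩

lemma Iso.finrank {A B : Obj k} (h : Iso A B) : Module.finrank k A.R = Module.finrank k B.R := by
  obtain ⟨e, he⟩ := h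
  exact e.toLinearEquiv.finrank_eq

lemma Iso.rk {A B : Obj k} (h : Iso A B) (j : ℕ) : rk k A.t j = rk k B.t j := by
  obtain ⟨e, he⟩ := h
  unfold HKA1.rk
  have : LinearMap.range (LinearMap.mulLeft k (B.t ^ j)) =
      (LinearMap.range (LinearMap.mulLeft k (A.t ^ j))).map (e.toLinearEquiv : A.R →ₗ[k] B.R) := by
    ext b
    simp only [LinearMap.mem_range, Submodule.mem_map, LinearMap.mulLeft_apply]
    constructor
    · rintro ⟨c, rfl⟩
      refine ⟨_, ⟨e.symm c, rfl⟩, ?_⟩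
      simp [he]
    · rintro ⟨_, ⟨c, rfl⟩, rfl⟩
      exact ⟨e c, by simp [he]⟩
  rw [this]
  exact (LinearEquiv.finrank_map_eq e.toLinearEquiv _).symm

lemma IsTens.ext {B C D : Type u} [CommRing B] [CommRing C] [Algebra k B] [Algebra k C]
    {a : ℕ} {ι : B →ₐ[k] C} {x y : C} (h : IsTens k a ι x y) [CommRing D] [Algebra k D]
    (f g : C →ₐ[k] D) (h1 : ∀ b, f (ι b) = g (ι b)) (hx : f x = g x) (hy : f y = g y) : f = g := by
  ext c
  refine h.ind (fun c => f c = g c) ?_ ?_ c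
  · intro u v hu hv; rw [map_add, map_add, hu, hv]
  · intro b i j; simp only [map_mul, map_pow, h1, hx, hy]

lemma tens_congr (a : ℕ) {B B' : Obj k} (h : Iso B B') : Iso (tens a B) (tens a B') := by
  obtain ⟨e, he⟩ := h
  obtain ⟨ι, x, y, h, ht⟩ := tens_spec a B
  obtain ⟨ι', x', y', h', ht'⟩ := tens_spec a B'
  obtain ⟨F, F1, F2, F3⟩ := h.lift _ (ι'.comp (e : B.R →ₐ[k] B'.R)) x' y' h'.hx h'.hy
  obtain ⟨G, G1, G2, G3⟩ := h'.lift _ (ι.comp (e.symm : B'.R →ₐ[k] B.R)) x y h.hx h.hy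
  refine ⟨AlgEquiv.ofAlgHom F G ?_ ?_, ?_⟩
  · apply h'.ext <;> simp [F1, F2, F3, G1, G2, G3]
  · apply h.ext <;> simp [F1, F2, F3, G1, G2, G3]
  · simp [ht, ht', F1, F2, F3, he]

lemma tens_swap_hom (a b : ℕ) {B C D C' D' : Type u} [CommRing B] [CommRing C] [CommRing D]
    [CommRing C'] [CommRing D'] [Algebra k B] [Algebra k C] [Algebra k D] [Algebra k C'] [Algebra k D']
    {ι : B →ₐ[k] C} {x y : C} (h : IsTens k b ι x y)
    {ι2 : C →ₐ[k] D} {x2 y2 : D} (h2 : IsTens k a ι2 x2 y2)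
    {ι' : B →ₐ[k] C'} {x' y' : C'} (h' : IsTens k a ι' x' y')
    {ι2' : C' →ₐ[k] D'} {x2' y2' : D'} (h2' : IsTens k b ι2' x2' y2') :
    ∃ F : D →ₐ[k] D', (∀ z, F (ι2 (ι z)) = ι2' (ι' z)) ∧ F x2 = ι2' x' ∧ F y2 = ι2' y' ∧
      F (ι2 x) = x2' ∧ F (ι2 y) = y2' := by
  obtain ⟨F, F1, F2, F3⟩ := h.lift _ (ι2'.comp ι') x2' y2' h2'.hx h2'.hy
  obtain ⟨G, G1, G2, G3⟩ := h2.lift _ F (ι2' x') (ι2' y') (by rw [← map_pow, h'.hx, map_zero])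
    (by rw [← map_pow, h'.hy, map_zero])
  exact ⟨G, by simp [G1, F1], G2, G3, by rw [G1, F2], by rw [G1, F3]⟩

lemma tens_swap (a b : ℕ) (B : Obj k) : Iso (tens a (tens b B)) (tens b (tens a B)) := by
  obtain ⟨ι, x, y, h, ht⟩ := tens_spec b B
  obtain ⟨ι2, x2, y2, h2, ht2⟩ := tens_spec a (tens b B)
  obtain ⟨ι', x', y', h', ht'⟩ := tens_spec a B
  obtain ⟨ι2', x2', y2', h2', ht2'⟩ := tens_spec b (tens a B)
  obtain ⟨F, F1, F2, F3, F4, F5⟩ := tens_swap_hom a b h h2 h' h2'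
  obtain ⟨G, G1, G2, G3, G4, G5⟩ := tens_swap_hom b a h' h2' h h2
  refine ⟨AlgEquiv.ofAlgHom F G ?_ ?_, ?_⟩
  · apply h2'.ext _ _ (fun b => ?_) <;> try simp [F1, F2, F3, F4, F5, G1, G2, G3, G4, G5]
    have : ((F.comp G).comp ι2') = ι2' := by
      apply h'.ext <;> simp [F1, F2, F3, F4, F5, G1, G2, G3, G4, G5]
    exact congrArg (fun f => f b) this
  · apply h2.ext _ _ (fun b => ?_) <;> try simp [F1, F2, F3, F4, F5, G1, G2, G3, G4, G5]
    have : ((G.comp F).comp ι2) = ι2 := by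
      apply h.ext <;> simp [F1, F2, F3, F4, F5, G1, G2, G3, G4, G5]
    exact congrArg (fun f => f b) this
  · simp [ht, ht', ht2, ht2', F1, F2, F3, F4, F5]
    ring

variable (k) in
noncomputable def obj (l : List ℕ) : Obj k := l.foldr tens ⟨k, 0⟩

lemma obj_cons (a : ℕ) (l : List ℕ) : obj k (a :: l) = tens a (obj k l) := rfl

lemma obj_perm {l l' : List ℕ} (h : l.Perm l') : Iso (obj k l) (obj k l') := by
  induction h with
  | nil => exact Iso.refl _
  | cons a _ ih => exact tens_congr a ih
  | swap a b l => exact tens_swap _ _ _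
  | trans _ _ h1 h2 => exact h1.trans h2

lemma two_eq_zero [CharP k 2] (B : Type*) [CommRing B] [Algebra k B] : (2 : B) = 0 := by
  rw [← map_ofNat (algebraMap k B) 2, show (OfNat.ofNat 2 : k) = 0 from CharTwo.two_eq_zero, map_zero]

lemma obj_finite (l : List ℕ) : Module.Finite k (obj k l).R := by
  induction l with
  | nil => exact (inferInstance : Module.Finite k k)
  | cons a l ih =>
    obtain ⟨ι, x, y, h, ht⟩ := tens_spec a (obj k l)
    exact h.fin ih

lemma obj_rank (l : List ℕ) : Module.finrank k (obj k l).R = (l.map (fun a => a * a)).prod := by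
  induction l with
  | nil => exact Module.finrank_self k
  | cons a l ih =>
    obtain ⟨ι, x, y, h, ht⟩ := tens_spec a (obj k l)
    have := obj_finite (k := k) l
    rw [obj_cons, h.rank inferInstance, ih]; simp

lemma obj_pow [CharP k 2] (s : ℕ) (l : List ℕ) (hl : ∀ a ∈ l, a ≤ 2 ^ s) : (obj k l).t ^ 2 ^ s = 0 := by
  induction l with
  | nil => exact zero_pow (by positivity)
  | cons a l ih =>
    obtain ⟨ι, x, y, h, ht⟩ := tens_spec a (obj k l)
    have ha : a ≤ 2 ^ s := hl a (by simp)
    rw [obj_cons, ht, add_pow_two_pow (two_eq_zero (k := k) _), ← map_pow, ih (fun b hb => hl b (by simp [hb])),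
      mul_pow, ← Nat.sub_add_cancel ha, pow_add, h.hx]
    simp

/-- combinatorial sums -/
lemma count1 (g : ℕ → ℤ) (p : ℕ) (hg : g (2 * (p + 1)) = 0) :
    (∑ w, (g 0 - g (len (2 * (p + 1)) w)) = (4 * (p + 1) - 1) * g 0 - 2 * ∑ i ∈ Finset.range (2 * p + 1), g (i + 1))
    ∧ (∑ w, g (2 * (p + 1) - len (2 * (p + 1)) w) = g 0 + 2 * ∑ i ∈ Finset.range (2 * p + 1), g (i + 1)) := by
  constructor
  · rw [sum_len _ (fun j => g 0 - g j), show 2 * (p + 1) = 2 * p + 1 + 1 by ring, Nat.add_sub_cancel,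
      Finset.sum_range_succ, show 2 * p + 1 + 1 = 2 * (p + 1) by ring, hg]
    simp only [Finset.sum_sub_distrib, Finset.sum_const, Finset.card_range]
    push_cast
    simp only [nsmul_eq_mul]
    push_cast
    ring
  · rw [sum_len _ (fun j => g (2 * (p + 1) - j)), show 2 * (p + 1) = 2 * p + 1 + 1 by ring, Nat.add_sub_cancel,
      Finset.sum_range_succ, ← Finset.sum_range_reflect (fun i => g (i + 1)) (2 * p + 1)]
    have : ∑ x ∈ Finset.range (2 * p + 1), g (2 * p + 1 + 1 - (x + 1)) =
        ∑ j ∈ Finset.range (2 * p + 1), g (2 * p + 1 - 1 - j + 1) := by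
      refine Finset.sum_congr rfl fun i hi => ?_
      rw [Finset.mem_range] at hi
      congr 1; omega
    rw [this, Nat.sub_self]
    ring

lemma count2 (g : ℕ → ℤ) (p : ℕ) :
    ∑ w, (g 0 - g (len (p + 1) w)) - ∑ w, g (2 * (p + 1) - len (p + 1) w) =
      (2 * p + 1) * g 0 - 2 * ∑ i ∈ Finset.range (2 * p + 1), g (i + 1) := by
  rw [sum_len _ (fun j => g 0 - g j), sum_len _ (fun j => g (2 * (p + 1) - j)), Nat.add_sub_cancel]
  have e1 : ∑ i ∈ Finset.range (2 * p + 1), g (i + 1) =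
      ∑ i ∈ Finset.range (p + 1), g (i + 1) + ∑ i ∈ Finset.range p, g (2 * (p + 1) - (i + 1)) := by
    rw [show 2 * p + 1 = (p + 1) + p by ring, Finset.sum_range_add, ← Finset.sum_range_reflect _ p]
    congr 1
    refine Finset.sum_congr rfl fun i hi => ?_
    rw [Finset.mem_range] at hi
    congr 1; omega
  have e2 : ∑ i ∈ Finset.range (2 * p + 1), g (i + 1) =
      ∑ i ∈ Finset.range p, g (i + 1) + ∑ i ∈ Finset.range (p + 1), g (2 * (p + 1) - (i + 1)) := by
    rw [show 2 * p + 1 = p + (p + 1) by ring, Finset.sum_range_add, ← Finset.sum_range_reflect _ (p + 1)]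
    congr 1
    refine Finset.sum_congr rfl fun i hi => ?_
    rw [Finset.mem_range] at hi
    congr 1; omega
  simp only [Finset.sum_sub_distrib, Finset.sum_const, Finset.card_range, nsmul_eq_mul]
  push_cast
  linear_combination e1 + e2

lemma rk_zero {B : Type u} [CommRing B] [Algebra k B] (t : B) : rk k t 0 = Module.finrank k B := by
  unfold rk
  rw [pow_zero, LinearMap.mulLeft_one, LinearMap.range_id, finrank_top]

lemma rk_of_pow {B : Type u} [CommRing B] [Algebra k B] (t : B) (j : ℕ) (h : t ^ j = 0) : rk k t j = 0 := by
  unfold rk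
  rw [h, LinearMap.mulLeft_zero_eq_zero, LinearMap.range_zero, finrank_bot]

noncomputable def dd (B : Obj k) : ℤ := Module.finrank k B.R - rk k B.t 1

lemma Iso.dd_eq {A B : Obj k} (h : Iso A B) : dd A = dd B := by
  rw [dd, dd, h.finrank, h.rk]

lemma tens_data [CharP k 2] (s a : ℕ) (ha : a ≤ 2 ^ s) (l : List ℕ) (hl : ∀ a ∈ l, a ≤ 2 ^ s) :
    dd (obj k (a :: l)) = ∑ w, ((rk k (obj k l).t 0 : ℤ) - rk k (obj k l).t (len a w)) ∧
    (rk k (obj k (a :: l)).t (2 ^ s - 1) : ℤ) = ∑ w, (rk k (obj k l).t (2 ^ s - len a w) : ℤ) := by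
  obtain ⟨ι, x, y, h, ht⟩ := tens_spec a (obj k l)
  have := obj_finite (k := k) l
  have h2 := two_eq_zero (k := k) (obj k l).R
  constructor
  · rw [dd, obj_cons, ht, rk_one h2 h, rk_zero]
  · rw [obj_cons, ht, rk_top h2 h _ s (obj_pow s l hl) ha]
    push_cast; rfl

lemma psi_step [CharP k 2] (s : ℕ) (l : List ℕ) (hl : ∀ a ∈ l, a ≤ 2 ^ (s + 1)) :
    dd (obj k (2 ^ (s + 1) :: l)) - rk k (obj k (2 ^ (s + 1) :: l)).t (2 ^ (s + 1) - 1) =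
    2 * (dd (obj k (2 ^ s :: l)) - rk k (obj k (2 ^ s :: l)).t (2 ^ (s + 1) - 1)) := by
  obtain ⟨a1, a2⟩ := tens_data (k := k) (s + 1) (2 ^ (s + 1)) le_rfl l hl
  obtain ⟨b1, b2⟩ := tens_data (k := k) (s + 1) (2 ^ s) (Nat.pow_le_pow_right (by norm_num) (by omega)) l hl
  have h0 := rk_of_pow (k := k) _ _ (obj_pow (k := k) (s + 1) l hl)
  obtain ⟨p, hp⟩ : ∃ p, 2 ^ s = p + 1 := ⟨2 ^ s - 1, (Nat.sub_add_cancel Nat.one_le_two_pow).symm⟩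
  have hQ : 2 ^ (s + 1) = 2 * (p + 1) := by rw [pow_succ, hp]; ring
  rw [hQ] at a1 a2 b2 h0 ⊢
  rw [hp] at b1 b2 ⊢
  obtain ⟨c1, c2⟩ := count1 (fun j => (rk k (obj k l).t j : ℤ)) p (by simp [h0])
  have c3 := count2 (fun j => (rk k (obj k l).t j : ℤ)) p
  rw [a1, a2, b1, b2, c1, c2, c3]
  ring

lemma sum_step [CharP k 2] (s : ℕ) (l : List ℕ) (hl : ∀ a ∈ l, a ≤ 2 ^ (s + 1)) :
    dd (obj k (2 ^ (s + 1) :: l)) + rk k (obj k (2 ^ (s + 1) :: l)).t (2 ^ (s + 1) - 1) =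
    2 * 2 ^ (s + 1) * Module.finrank k (obj k l).R := by
  obtain ⟨a1, a2⟩ := tens_data (k := k) (s + 1) (2 ^ (s + 1)) le_rfl l hl
  have h0 := rk_of_pow (k := k) _ _ (obj_pow (k := k) (s + 1) l hl)
  obtain ⟨p, hp⟩ : ∃ p, 2 ^ s = p + 1 := ⟨2 ^ s - 1, (Nat.sub_add_cancel Nat.one_le_two_pow).symm⟩
  have hQ : 2 ^ (s + 1) = 2 * (p + 1) := by rw [pow_succ, hp]; ring
  have hQ' : (2 : ℤ) ^ (s + 1) = 2 * (p + 1) := by exact_mod_cast hQ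
  rw [hQ', ← rk_zero (k := k) (obj k l).t]
  rw [hQ] at a1 a2 h0 ⊢
  obtain ⟨c1, c2⟩ := count1 (fun j => (rk k (obj k l).t j : ℤ)) p (by simp [h0])
  rw [a1, a2, c1, c2]
  ring

lemma psi_iter [CharP k 2] (s i j : ℕ) :
    dd (obj k (List.replicate i (2 ^ (s + 1)) ++ List.replicate j (2 ^ s))) -
      rk k (obj k (List.replicate i (2 ^ (s + 1)) ++ List.replicate j (2 ^ s))).t (2 ^ (s + 1) - 1) =
    2 ^ i * (dd (obj k (List.replicate (i + j) (2 ^ s))) -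
      rk k (obj k (List.replicate (i + j) (2 ^ s))).t (2 ^ (s + 1) - 1)) := by
  induction i generalizing j with
  | zero => rw [Nat.zero_add]; simp
  | succ i ih =>
    have h1 := psi_step (k := k) s (List.replicate i (2 ^ (s + 1)) ++ List.replicate j (2 ^ s)) (by
      intro a ha
      rw [List.mem_append, List.mem_replicate, List.mem_replicate] at ha
      rcases ha with ⟨_, rfl⟩ | ⟨_, rfl⟩
      · exact le_rfl
      · exact Nat.pow_le_pow_right (by norm_num) (by omega))
    have hp : Iso (obj k (2 ^ s :: (List.replicate i (2 ^ (s + 1)) ++ List.replicate j (2 ^ s))))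
        (obj k (List.replicate i (2 ^ (s + 1)) ++ List.replicate (j + 1) (2 ^ s))) :=
      obj_perm (by rw [List.replicate_succ (n := j)]; exact List.perm_middle.symm)
    have h2 := ih (j + 1)
    rw [hp.dd_eq, hp.rk, h2] at h1
    · rw [List.replicate_succ, List.cons_append, h1, show i + 1 + j = i + (j + 1) by ring]
      ring

lemma dd_rec [CharP k 2] (s m : ℕ) :
    dd (obj k (List.replicate (m + 1) (2 ^ (s + 1)))) =
      2 ^ ((s + 1) * (2 * m + 1)) + 2 ^ m * dd (obj k (List.replicate (m + 1) (2 ^ s))) := by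
  have h1 := psi_iter (k := k) s (m + 1) 0
  have h2 := sum_step (k := k) s (List.replicate m (2 ^ (s + 1))) (by
      intro a ha
      rw [List.mem_replicate] at ha
      exact ha.2.le)
  have h3 : (obj k (List.replicate (m + 1) (2 ^ s))).t ^ (2 ^ (s + 1) - 1) = 0 := by
    have h := obj_pow (k := k) s (List.replicate (m + 1) (2 ^ s)) (by
      intro a ha
      rw [List.mem_replicate] at ha
      exact ha.2.le)
    refine pow_eq_zero_of_le ?_ h
    have : 1 ≤ 2 ^ s := Nat.one_le_two_pow
    rw [pow_succ]; omega
  rw [List.replicate_zero, List.append_nil, add_zero, rk_of_pow _ _ h3] at h1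
  rw [obj_rank] at h2
  simp only [List.map_replicate, List.prod_replicate] at h2
  rw [← List.replicate_succ] at h2
  push_cast at h2
  have e : (2 : ℤ) * 2 ^ (s + 1) * (2 ^ (s + 1) * 2 ^ (s + 1)) ^ m = 2 * 2 ^ ((s + 1) * (2 * m + 1)) := by
    rw [← pow_add, ← pow_mul, mul_assoc, ← pow_add]; congr 2; ring
  rw [e] at h2
  have e' : (2 : ℤ) ^ (m + 1) = 2 * 2 ^ m := by ring
  rw [e'] at h1
  push_cast at h1
  linarith

lemma dd_formula [CharP k 2] (e m : ℕ) :
    ((2 : ℤ) ^ (m + 1) - 1) * dd (obj k (List.replicate (m + 1) (2 ^ e))) =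
      2 ^ (m + 1) * 2 ^ ((2 * m + 1) * e) - 2 ^ (m * e) := by
  induction e with
  | zero =>
    have h := obj_pow (k := k) 0 (List.replicate (m + 1) (2 ^ 0)) (by
      intro a ha
      rw [List.mem_replicate] at ha
      exact ha.2.le)
    rw [dd, rk_of_pow _ 1 (by simpa using h), obj_rank]
    simp
  | succ e ih =>
    rw [dd_rec, mul_add, mul_left_comm, ih]
    ring

end iso

section link
variable {k : Type u} [Field k]

lemma univ (q m : ℕ) : ∃ x y : ℕ → (obj k (List.replicate m q)).R,
    (∀ i < m, x i ^ q = 0 ∧ y i ^ q = 0) ∧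
    (obj k (List.replicate m q)).t = ∑ i ∈ Finset.range m, x i * y i ∧
    (∀ (D : Type u) [CommRing D] [Algebra k D] (c d : ℕ → D), (∀ i < m, c i ^ q = 0 ∧ d i ^ q = 0) →
      ∃ Φ : (obj k (List.replicate m q)).R →ₐ[k] D, ∀ i < m, Φ (x i) = c i ∧ Φ (y i) = d i) ∧
    (∀ (D : Type u) [CommRing D] [Algebra k D] (Φ Ψ : (obj k (List.replicate m q)).R →ₐ[k] D),
      (∀ i < m, Φ (x i) = Ψ (x i) ∧ Φ (y i) = Ψ (y i)) → Φ = Ψ) := by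
  induction m with
  | zero =>
    refine ⟨fun _ => 0, fun _ => 0, by simp, ?_, ?_, ?_⟩
    · simp; rfl
    · intro D _ _ c d _
      exact ⟨(Algebra.ofId k D : k →ₐ[k] D), by simp⟩
    · intro D _ _ Φ Ψ _
      exact (inferInstance : Subsingleton (k →ₐ[k] D)).elim Φ Ψ
  | succ m ih =>
    obtain ⟨x, y, h1, h2, h3, h4⟩ := ih
    obtain ⟨ι, X, Y, h, ht⟩ := tens_spec q (obj k (List.replicate m q))
    rw [List.replicate_succ, obj_cons]
    have hne : ∀ i < m, i ≠ m := fun i hi => by omega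
    refine ⟨fun i => if i = m then X else ι (x i), fun i => if i = m then Y else ι (y i), ?_, ?_, ?_, ?_⟩
    · intro i hi
      by_cases hm : i = m
      · simp [hm, h.hx, h.hy]
      · simp only [hm, if_false]
        rw [← map_pow, ← map_pow, (h1 i (by omega)).1, (h1 i (by omega)).2, map_zero]
        simp
    · rw [ht, h2, Finset.sum_range_succ, map_sum, add_comm]
      congr 1
      · refine Finset.sum_congr rfl fun i hi => ?_
        beta_reduce
        rw [if_neg (hne i (Finset.mem_range.1 hi)), if_neg (hne i (Finset.mem_range.1 hi)), map_mul]
      · simp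
    · intro D _ _ c d hcd
      obtain ⟨φ, hφ⟩ := h3 D c d (fun i hi => hcd i (by omega))
      obtain ⟨Φ, H1, H2, H3⟩ := h.lift D φ (c m) (d m) (hcd m (by omega)).1 (hcd m (by omega)).2
      refine ⟨Φ, fun i hi => ?_⟩
      by_cases hm : i = m
      · subst hm; simp [H2, H3]
      · simp only [hm, if_false, H1]
        exact hφ i (by omega)
    · intro D _ _ Φ Ψ H
      have hh : Φ.comp ι = Ψ.comp ι := h4 D _ _ (fun i hi => by
        have := H i (by omega)
        simpa only [hne i hi, if_false, AlgHom.comp_apply] using this)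
      have hm := H m (by omega)
      simp only [if_true] at hm
      exact h.ext Φ Ψ (fun b => DFunLike.congr_fun hh b) hm.1 hm.2

lemma quot_dd {B : Obj k} [Module.Finite k B.R] :
    (Module.finrank k (B.R ⧸ Ideal.span {B.t}) : ℤ) = dd B := by
  have h := finrank_quot (k := k) B.t 1
  have e : Module.finrank k (B.R ⧸ LinearMap.range (LinearMap.mulLeft k (B.t ^ 1))) =
      Module.finrank k (B.R ⧸ Ideal.span {B.t}) := by
    have hs : (Ideal.span {B.t}).restrictScalars k = LinearMap.range (LinearMap.mulLeft k (B.t ^ 1)) := by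
      ext z
      rw [Submodule.restrictScalars_mem, Ideal.mem_span_singleton', LinearMap.mem_range]
      simp [mul_comm]
    rw [← hs]
    exact (Submodule.Quotient.restrictScalarsEquiv k (Ideal.span {B.t})).finrank_eq
  rw [dd, ← h, e]
  push_cast; ring

lemma hk_eq (q m : ℕ) (u0 : ∀ i : Fin m, 2 * (i : ℕ) < 2 * m) (u1 : ∀ i : Fin m, 2 * (i : ℕ) + 1 < 2 * m) :
    Module.finrank k (MvPolynomial (Fin (2 * m)) k ⧸
      Ideal.span (Set.range (fun i : Fin (2 * m) => (MvPolynomial.X i : MvPolynomial (Fin (2 * m)) k) ^ q) ∪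
        {∑ i : Fin m, (MvPolynomial.X (⟨2 * i, u0 i⟩ : Fin (2 * m)) : MvPolynomial (Fin (2 * m)) k) *
              MvPolynomial.X (⟨2 * i + 1, u1 i⟩ : Fin (2 * m))})) =
    Module.finrank k ((obj k (List.replicate m q)).R ⧸ Ideal.span {(obj k (List.replicate m q)).t}) := by
  obtain ⟨x, y, h1, h2, h3, h4⟩ := univ (k := k) q m
  generalize hJ : Ideal.span (Set.range (fun i : Fin (2 * m) => (MvPolynomial.X i : MvPolynomial (Fin (2 * m)) k) ^ q) ∪
        {∑ i : Fin m, (MvPolynomial.X (⟨2 * i, u0 i⟩ : Fin (2 * m)) : MvPolynomial (Fin (2 * m)) k) *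
              MvPolynomial.X (⟨2 * i + 1, u1 i⟩ : Fin (2 * m))}) = J
  generalize obj k (List.replicate m q) = B at *
  have hJ1 : ∀ i, (MvPolynomial.X i : MvPolynomial (Fin (2 * m)) k) ^ q ∈ J := fun i => by
    rw [← hJ]; exact Ideal.subset_span (Or.inl ⟨i, rfl⟩)
  have hJ2 : ∑ i : Fin m, (MvPolynomial.X (⟨2 * i, u0 i⟩ : Fin (2 * m)) : MvPolynomial (Fin (2 * m)) k) *
              MvPolynomial.X (⟨2 * i + 1, u1 i⟩ : Fin (2 * m)) ∈ J := by
    rw [← hJ]; exact Ideal.subset_span (Or.inr rfl)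
  let v : Fin (2 * m) → B.R := fun j => if (j : ℕ) % 2 = 0 then x (j / 2) else y (j / 2)
  have v0 : ∀ (i : ℕ) (hi : 2 * i < 2 * m), v ⟨2 * i, hi⟩ = x i := by
    intro i hi; simp [v]
  have v1 : ∀ (i : ℕ) (hi : 2 * i + 1 < 2 * m), v ⟨2 * i + 1, hi⟩ = y i := by
    intro i hi
    have : (2 * i + 1) / 2 = i := by omega
    simp [v, this, Nat.add_mod]
  let f0 : MvPolynomial (Fin (2 * m)) k →ₐ[k] B.R ⧸ Ideal.span {B.t} :=
    (Ideal.Quotient.mkₐ k _).comp (MvPolynomial.aeval v)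
  have hf0 : ∀ a ∈ J, f0 a = 0 := by
    have : J ≤ RingHom.ker f0 := by
      rw [← hJ, Ideal.span_le]
      rintro _ (⟨i, rfl⟩ | rfl)
      · have : v i ^ q = 0 := by
          have := h1 (i / 2) (by omega)
          simp only [v]; split_ifs
          · exact this.1
          · exact this.2
        simp only [SetLike.mem_coe, RingHom.mem_ker, f0, AlgHom.comp_apply, map_pow, MvPolynomial.aeval_X]
        rw [← map_pow, this, map_zero]
      · simp only [SetLike.mem_coe, RingHom.mem_ker, f0, AlgHom.comp_apply, map_sum (MvPolynomial.aeval v), map_mul,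
          MvPolynomial.aeval_X, v0, v1]
        rw [Fin.sum_univ_eq_sum_range (fun i => x i * y i) m, ← h2]
        exact Ideal.Quotient.eq_zero_iff_mem.2 (Ideal.mem_span_singleton_self _)
    exact fun a ha => this ha
  let f : (MvPolynomial (Fin (2 * m)) k ⧸ J) →ₐ[k] B.R ⧸ Ideal.span {B.t} := Ideal.Quotient.liftₐ J f0 hf0
  let X' : ℕ → MvPolynomial (Fin (2 * m)) k ⧸ J := fun j =>
    if h : j < 2 * m then Ideal.Quotient.mkₐ k J (MvPolynomial.X ⟨j, h⟩) else 0
  have hX' : ∀ j (h : j < 2 * m), X' j = Ideal.Quotient.mkₐ k J (MvPolynomial.X ⟨j, h⟩) := fun j h => by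
    simp only [X', h, dif_pos]
  obtain ⟨g0, hg0⟩ := h3 _ (fun i => X' (2 * i)) (fun i => X' (2 * i + 1)) (fun i hi => by
    rw [hX' _ (by omega), hX' _ (by omega), ← map_pow, ← map_pow]
    exact ⟨Ideal.Quotient.eq_zero_iff_mem.2 (hJ1 _), Ideal.Quotient.eq_zero_iff_mem.2 (hJ1 _)⟩)
  have hgt : g0 B.t = 0 := by
    rw [h2, map_sum, ← Fin.sum_univ_eq_sum_range (fun i => g0 (x i * y i)) m]
    have : ∀ i : Fin m, g0 (x i * y i) = Ideal.Quotient.mkₐ k J (MvPolynomial.X (⟨2 * i, u0 i⟩ : Fin (2 * m)) *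
              MvPolynomial.X (⟨2 * i + 1, u1 i⟩ : Fin (2 * m))) := by
      intro i
      rw [map_mul, map_mul, (hg0 i i.2).1, (hg0 i i.2).2, hX', hX']
    rw [Finset.sum_congr rfl fun i _ => this i, ← map_sum]
    exact Ideal.Quotient.eq_zero_iff_mem.2 hJ2
  let g : (B.R ⧸ Ideal.span {B.t}) →ₐ[k] (MvPolynomial (Fin (2 * m)) k ⧸ J) :=
    Ideal.Quotient.liftₐ _ g0 (fun a ha => by
      obtain ⟨b, rfl⟩ := Ideal.mem_span_singleton'.1 ha
      rw [map_mul, hgt, mul_zero])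
  have gm : ∀ b, g (Ideal.Quotient.mkₐ k _ b) = g0 b := fun b => rfl
  have fm : ∀ b, f (Ideal.Quotient.mkₐ k _ b) = f0 b := fun b => rfl
  have f0X : ∀ i, f0 (MvPolynomial.X i) = Ideal.Quotient.mkₐ k _ (v i) := fun i => by
    simp [f0]
  have fg : f.comp g = AlgHom.id k _ := by
    apply Ideal.Quotient.algHom_ext
    apply h4
    intro i hi
    simp only [AlgHom.comp_apply, gm, (hg0 i hi).1, (hg0 i hi).2, AlgHom.id_apply]
    rw [hX' _ (by omega), hX' _ (by omega), fm, fm, f0X, f0X, v0, v1]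
    exact ⟨rfl, rfl⟩
  have gf : g.comp f = AlgHom.id k _ := by
    apply Ideal.Quotient.algHom_ext
    apply MvPolynomial.algHom_ext
    intro i
    simp only [AlgHom.comp_apply, fm, f0X, gm, AlgHom.id_apply]
    have hi := hg0 (i / 2) (by omega)
    have hv : v i = if (i : ℕ) % 2 = 0 then x (i / 2) else y (i / 2) := rfl
    rw [hv]
    split_ifs with hc
    · rw [hi.1, hX' _ (by omega)]
      congr 3
      omega
    · rw [hi.2, hX' _ (by omega)]
      congr 3
      omega
  exact (AlgEquiv.ofAlgHom f g fg gf).toLinearEquiv.finrank_eq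

end link

end HKA1

open MvPolynomial

/-- Hilbert–Kunz function of the odd-dimensional `A₁` singularity in characteristic 2:
for `d = 2m − 1`,
`(2^m − 1) · HK_e(R_{2,d}) = 2^m · 2^{d·e} − 2^{(m−1)·e}`. -/
theorem HK_function_A1_char_two_odd (k : Type*) [Field k] [CharP k 2]
    (m : ℕ) (hm : 1 ≤ m) (e : ℕ) :
    ((2 : ℤ) ^ m - 1) *
        (HKfun k (2 * m) 2 e
          (∑ i : Fin m,
            (X (⟨2 * i, by omega⟩ : Fin (2 * m)) : MvPolynomial (Fin (2 * m)) k) *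
              X (⟨2 * i + 1, by omega⟩ : Fin (2 * m)))) =
      2 ^ m * 2 ^ ((2 * m - 1) * e) - 2 ^ ((m - 1) * e) := by
  obtain ⟨n, rfl⟩ : ∃ n, m = n + 1 := ⟨m - 1, by omega⟩
  have := HKA1.obj_finite (k := k) (List.replicate (n + 1) (2 ^ e))
  unfold HKfun
  rw [HKA1.hk_eq, HKA1.quot_dd, HKA1.dd_formula]
  rfl
end

section
/- Let k be a field of characteristic 2, let m ≥ 1, set d = 2m, and let e ≥ 1. Then dim_k ( k[x_0,…,x_d] / (x_0^{2^e},…,x_d^{2^e}, x_0x_1 + x_2x_3 + ⋯ + x_{d−2}x_{d−1} + x_d²) ) = (2^m + 1) · 2^{m·(2e−1)}. In particular the Hilbert–Kunz function of the even-dimensional A_1 singularity in characteristic 2 is HK_e(R_{2,d}) = ((2^m+1)/2^m)·2^{de}. -/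
open MvPolynomial

universe u

section A1aux

lemma a1_coker {k A B ι κ : Type*} [Field k] [CommRing A] [CommRing B] [Algebra k A] [Algebra k B]
    [Algebra A B] [IsScalarTower k A B] [Module.Finite k A] [Fintype ι] [Fintype κ]
    (b : Module.Basis ((Fin 2 × ι) × (Fin 2 × κ)) A B) (u : B)
    (hu : ∀ i j, u * b ((0, i), (0, j)) = b ((1, i), (1, j)))
    (hu1 : ∀ i y, u * b ((1, i), y) = 0)
    (hu2 : ∀ x j, u * b (x, (1, j)) = 0)
    (t : A) (ht : t * t = 0) :
    Module.finrank k (B ⧸ Ideal.span {algebraMap A B t + u}) =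
      (Fintype.card ι * Fintype.card κ) *
        (Module.finrank k A + 2 * Module.finrank k (A ⧸ Ideal.span {t})) := by
  classical
  have hrep0 : ∀ v : B, ∀ i j, b.repr (u * v) ((1, i), (1, j)) = b.repr v ((0, i), (0, j)) := by
    intro v i j
    have : (b.coord ((1, i), (1, j))) ∘ₗ (LinearMap.mulLeft A u) = b.coord ((0, i), (0, j)) := by
      apply b.ext
      rintro ⟨⟨ε, i'⟩, ⟨δ, j'⟩⟩
      fin_cases ε <;> fin_cases δ <;> simp [hu, hu1, hu2, Finsupp.single_apply]
    exact LinearMap.congr_fun this v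
  have hrep1 : ∀ v : B, ∀ i y, b.repr (u * v) ((0, i), y) = 0 := by
    intro v i y
    have : (b.coord ((0, i), y)) ∘ₗ (LinearMap.mulLeft A u) = 0 := by
      apply b.ext
      rintro ⟨⟨ε, i'⟩, ⟨δ, j'⟩⟩
      fin_cases ε <;> fin_cases δ <;> simp [hu, hu1, hu2, Finsupp.single_apply]
    exact LinearMap.congr_fun this v
  have hrep2 : ∀ v : B, ∀ x j, b.repr (u * v) (x, (0, j)) = 0 := by
    intro v x j
    have : (b.coord (x, (0, j))) ∘ₗ (LinearMap.mulLeft A u) = 0 := by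
      apply b.ext
      rintro ⟨⟨ε, i'⟩, ⟨δ, j'⟩⟩
      fin_cases ε <;> fin_cases δ <;> simp [hu, hu1, hu2, Finsupp.single_apply]
    exact LinearMap.congr_fun this v
  have hrept : ∀ (v : B) x, b.repr (algebraMap A B t * v) x = t * b.repr v x := by
    intro v x
    rw [← Algebra.smul_def]; simp
  let q : A →ₗ[A] A ⧸ Ideal.span {t} := (Ideal.span {t}).mkQ
  let L : B →ₗ[A] (ι × κ → A × (A ⧸ Ideal.span {t}) × (A ⧸ Ideal.span {t})) :=
    LinearMap.pi fun ij =>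
      (b.coord ((0, ij.1), (0, ij.2)) - t • b.coord ((1, ij.1), (1, ij.2))).prod
        ((q ∘ₗ b.coord ((1, ij.1), (0, ij.2))).prod (q ∘ₗ b.coord ((0, ij.1), (1, ij.2))))
  have hL : ∀ v ij, L v ij = (b.repr v ((0, ij.1), (0, ij.2)) - t * b.repr v ((1, ij.1), (1, ij.2)),
      q (b.repr v ((1, ij.1), (0, ij.2))), q (b.repr v ((0, ij.1), (1, ij.2)))) := by
    intro v ij; rfl
  have hsurj : Function.Surjective L := by
    intro w
    choose f hf using fun ij => Submodule.mkQ_surjective (Ideal.span {t}) (w ij).2.1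
    choose g hg using fun ij => Submodule.mkQ_surjective (Ideal.span {t}) (w ij).2.2
    refine ⟨b.equivFun.symm fun x =>
      if x.1.1 = 0 then (if x.2.1 = 0 then (w (x.1.2, x.2.2)).1 else g (x.1.2, x.2.2))
      else (if x.2.1 = 0 then f (x.1.2, x.2.2) else 0), ?_⟩
    funext ij
    rw [hL]
    simp only [← Module.Basis.equivFun_apply, LinearEquiv.apply_symm_apply]
    simp only [if_true, if_false, one_ne_zero, mul_zero, sub_zero]
    exact Prod.ext rfl (Prod.ext (hf ij) (hg ij))
  have hker : LinearMap.ker (L.restrictScalars k) =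
      (Ideal.span {algebraMap A B t + u}).restrictScalars k := by
    ext v
    simp only [LinearMap.mem_ker, LinearMap.restrictScalars_apply, Submodule.restrictScalars_mem,
      Ideal.mem_span_singleton]
    constructor
    · intro h
      have h' : ∀ ij, _ := fun ij => (hL v ij).symm.trans (congrFun h ij)
      simp only [Pi.zero_apply, Prod.mk_eq_zero, q, Submodule.mkQ_apply,
        Submodule.Quotient.mk_eq_zero, Ideal.mem_span_singleton] at h'
      choose h1 h2 using h'
      choose h2 h3 using h2
      choose f hf using h2
      choose g hg using h3
      refine ⟨b.equivFun.symm fun x =>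
        if x.1.1 = 0 then (if x.2.1 = 0 then b.repr v ((1, x.1.2), (1, x.2.2)) else g (x.1.2, x.2.2))
        else (if x.2.1 = 0 then f (x.1.2, x.2.2) else 0), ?_⟩
      apply b.ext_elem
      rintro ⟨⟨ε, i⟩, ⟨δ, j⟩⟩
      rw [add_mul, map_add, Finsupp.add_apply, hrept]
      fin_cases ε <;> fin_cases δ <;> simp only [Fin.zero_eta, Fin.mk_one, hrep0, hrep1, hrep2] <;>
      simp only [← Module.Basis.equivFun_apply, LinearEquiv.apply_symm_apply] <;> simp
      · simpa [sub_eq_zero] using h1 (i, j)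
      · simpa using hg (i, j)
      · simpa using hf (i, j)
    · rintro ⟨v, rfl⟩
      funext ij
      rw [hL]
      simp only [add_mul, map_add, Finsupp.add_apply, hrept, hrep0, hrep1, hrep2, Pi.zero_apply,
        Prod.mk_eq_zero, q, Submodule.mkQ_apply, add_zero,
        Submodule.Quotient.mk_eq_zero, Ideal.mem_span_singleton, dvd_mul_right, and_true]
      rw [mul_add, ← mul_assoc, ht]; ring
  have e := (Submodule.quotEquivOfEq _ _ hker).symm.trans
    ((L.restrictScalars k).quotKerEquivOfSurjective hsurj)
  have e' : Module.finrank k (B ⧸ Ideal.span {algebraMap A B t + u}) = Module.finrank k (B ⧸ (Ideal.span {algebraMap A B t + u}).restrictScalars k) := rfl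
  rw [e', e.finrank_eq, Module.finrank_pi_fintype]
  simp only [Module.finrank_prod, Finset.sum_const, Finset.card_univ, Fintype.card_prod, smul_eq_mul]
  ring

lemma a1_ext {k : Type*} [Field k] {n : ℕ} {A : Type*} [CommRing A] [Algebra k A]
    (φ : MvPolynomial (Fin n) k →ₐ[k] A) (hs : Function.Surjective φ)
    (S : Set (MvPolynomial (Fin n) k)) (hS : RingHom.ker φ = Ideal.span S)
    (h0 : MvPolynomial (Fin (n+1)) k) (h : Polynomial A)
    (hh : Polynomial.mapAlgHom φ (optionEquivLeft k (Fin n) (renameEquiv k finSuccEquivLast h0)) = h) :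
    ∃ ψ : MvPolynomial (Fin (n+1)) k →ₐ[k] AdjoinRoot h, Function.Surjective ψ ∧
      RingHom.ker ψ = Ideal.span (rename Fin.castSucc '' S ∪ {h0}) ∧
      ψ (X (Fin.last n)) = AdjoinRoot.root h ∧
      ∀ p, ψ (rename Fin.castSucc p) = algebraMap A (AdjoinRoot h) (φ p) := by
  let E : MvPolynomial (Fin (n+1)) k ≃ₐ[k] Polynomial (MvPolynomial (Fin n) k) :=
    (renameEquiv k finSuccEquivLast).trans (optionEquivLeft k (Fin n))
  let μ : Polynomial A →ₐ[k] AdjoinRoot h := (AdjoinRoot.mkₐ h).restrictScalars k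
  have hms : Function.Surjective (Polynomial.mapAlgHom φ) := Polynomial.map_surjective _ hs
  have hE1 : E (X (Fin.last n)) = Polynomial.X := by simp [E]
  have hE2 : ∀ p, E (rename Fin.castSucc p) = Polynomial.C p := by
    intro p
    have : (E : _ →ₐ[k] _).comp (rename Fin.castSucc) = 
      IsScalarTower.toAlgHom k (MvPolynomial (Fin n) k) (Polynomial (MvPolynomial (Fin n) k)) := by
      ext i : 1
      simp [E]
    exact AlgHom.congr_fun this p
  refine ⟨(μ.comp (Polynomial.mapAlgHom φ)).comp (E : _ →ₐ[k] _), ?_, ?_, ?_, ?_⟩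
  · exact (AdjoinRoot.mk_surjective.comp hms).comp E.surjective
  · have hEs : ∀ p, E (E.symm p) = p := E.apply_symm_apply
    have hk1 : RingHom.ker (Polynomial.mapAlgHom φ) = (Ideal.span S).map Polynomial.C := by
      rw [← hS]; exact Polynomial.ker_mapRingHom _
    apply le_antisymm
    · intro p hp
      have h1 : AdjoinRoot.mk h (Polynomial.mapAlgHom φ (E p)) = 0 := hp
      rw [AdjoinRoot.mk_eq_zero] at h1
      obtain ⟨r, hr⟩ := h1
      obtain ⟨r, rfl⟩ := hms r
      have h2 : E p - E h0 * r ∈ RingHom.ker (Polynomial.mapAlgHom φ) := by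
        rw [RingHom.mem_ker, map_sub, map_mul, hr, ← hh]; exact sub_self _
      have h3 : p - h0 * E.symm r ∈ Ideal.span (rename (R := k) Fin.castSucc '' S) := by
        rw [hk1, Ideal.map_span] at h2
        have := Ideal.mem_map_of_mem E.symm.toAlgHom h2
        rw [Ideal.map_span, Set.image_image] at this
        have hf : (fun x => E.symm.toAlgHom (Polynomial.C x)) = rename (R := k) (Fin.castSucc (n := n)) := by
          funext x; rw [← hE2]; simp
        rw [hf] at this
        simpa using this
      have : p = (p - h0 * E.symm r) + E.symm r * h0 := by ring
      rw [this]
      apply Ideal.add_mem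
      · exact Ideal.span_mono Set.subset_union_left h3
      · exact Ideal.mul_mem_left _ _ (Ideal.subset_span (Or.inr rfl))
    · rw [Ideal.span_le]
      rintro x (⟨p, hp, rfl⟩ | rfl)
      · have : φ p = 0 := by rw [← RingHom.mem_ker, hS]; exact Ideal.subset_span hp
        simp [RingHom.mem_ker, hE2, this]
      · change μ (Polynomial.mapAlgHom φ (E x)) = 0
        have : Polynomial.mapAlgHom φ (E x) = h := hh
        rw [this]; exact AdjoinRoot.mk_self
  · change μ (Polynomial.mapAlgHom φ (E _)) = _
    rw [hE1]
    simp [μ]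
  · intro p
    change μ (Polynomial.mapAlgHom φ (E _)) = _
    rw [hE2]
    simp [μ]


lemma a1_set {k : Type*} [Field k] (n q : ℕ) :
    rename (R := k) Fin.castSucc '' (Set.range fun i : Fin n => (X i : MvPolynomial (Fin n) k) ^ q) ∪
      {X (Fin.last n) ^ q} = Set.range fun i : Fin (n+1) => (X i : MvPolynomial (Fin (n+1)) k) ^ q := by
  ext p
  constructor
  · rintro (⟨_, ⟨i, rfl⟩, rfl⟩ | rfl)
    · exact ⟨i.castSucc, by simp⟩
    · exact ⟨Fin.last n, rfl⟩
  · rintro ⟨i, rfl⟩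
    refine Fin.lastCases ?_ (fun i => ?_) i
    · exact Or.inr rfl
    · exact Or.inl ⟨_, ⟨i, rfl⟩, by simp⟩

lemma a1_basis {A : Type*} [CommRing A] [Nontrivial A] (Q : ℕ) :
    ∃ b : Module.Basis (Fin 2 × Fin Q) A (AdjoinRoot (Polynomial.X ^ (2 * Q) : Polynomial A)),
      ∀ x, b x = AdjoinRoot.root _ ^ ((x.2 : ℕ) + Q * (x.1 : ℕ)) := by
  let pb := AdjoinRoot.powerBasis' (Polynomial.monic_X_pow (R := A) (2 * Q))
  have hd : pb.dim = 2 * Q := by simp [pb]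
  refine ⟨pb.basis.reindex ((finCongr hd).trans finProdFinEquiv.symm), fun x => ?_⟩
  rw [Module.Basis.reindex_apply, pb.basis_eq_pow]
  rfl

lemma a1_root_pow {A : Type*} [CommRing A] (n : ℕ) :
    AdjoinRoot.root (Polynomial.X ^ n : Polynomial A) ^ n = 0 := by
  rw [← AdjoinRoot.mk_X, ← map_pow]; exact AdjoinRoot.mk_self

noncomputable def a1G (k : Type*) [Field k] (m Q : ℕ) : MvPolynomial (Fin (2 * m)) k :=
  ∑ i : Fin m, (X (⟨2 * i, by omega⟩ : Fin (2 * m)) * X (⟨2 * i + 1, by omega⟩ : Fin (2 * m))) ^ Q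

lemma a1G_succ (k : Type*) [Field k] (m Q : ℕ) :
    a1G k (m + 1) Q = rename (R := k) (Fin.castSucc (n := 2 * m + 1))
      (rename (R := k) (Fin.castSucc (n := 2 * m)) (a1G k m Q)) +
      (rename (R := k) (Fin.castSucc (n := 2 * m + 1)) (X (Fin.last (2 * m))) *
        X (Fin.last (2 * m + 1))) ^ Q := by
  unfold a1G
  rw [Fin.sum_univ_castSucc]
  simp only [map_sum, map_pow, map_mul, rename_X]
  rfl

theorem a1_tower (k : Type u) [Field k] [CharP k 2] (Q : ℕ) (hQ : 0 < Q) (m : ℕ) :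
    ∃ (A : Type u) (_ : CommRing A) (_ : Algebra k A) (φ : MvPolynomial (Fin (2 * m)) k →ₐ[k] A),
      Function.Surjective φ ∧
      RingHom.ker φ = Ideal.span (Set.range fun i => (X i : MvPolynomial (Fin (2 * m)) k) ^ (2 * Q)) ∧
      Module.Finite k A ∧ Module.finrank k A = (2 * Q) ^ (2 * m) ∧
      φ (a1G k m Q) * φ (a1G k m Q) = 0 ∧
      2 * Module.finrank k (A ⧸ Ideal.span {φ (a1G k m Q)}) = Q ^ (2 * m) * (4 ^ m + 2 ^ m) := by
  induction m with
  | zero =>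
    refine ⟨k, inferInstance, inferInstance, aeval (fun i => i.elim0), ?_, ?_, inferInstance, ?_, ?_, ?_⟩
    · intro x; exact ⟨C x, by simp⟩
    · have : IsEmpty (Fin (2 * 0)) := Fin.isEmpty
      rw [Set.range_eq_empty, Ideal.span_empty]
      refine (RingHom.injective_iff_ker_eq_bot _).1 ?_
      intro p q h
      obtain ⟨p, rfl⟩ := C_surjective (R := k) (Fin (2 * 0)) p
      obtain ⟨q, rfl⟩ := C_surjective (R := k) (Fin (2 * 0)) q
      simpa using h
    · simp
    · simp [a1G]
    · have h0 : (aeval (fun i : Fin (2 * 0) => (i.elim0 : k))) (a1G k 0 Q) = 0 := by simp [a1G]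
      rw [h0]
      have : Ideal.span {(0 : k)} = ⊥ := by simp
      rw [this]
      have e : (k ⧸ (⊥ : Submodule k k)) ≃ₗ[k] k := Submodule.quotEquivOfEqBot _ rfl
      have := e.finrank_eq
      simp only [Module.finrank_self] at this
      erw [this]
      norm_num
  | succ m ih =>
    obtain ⟨A, _, _, φ, hs, hk, hfin, hrank, ht, hc⟩ := ih
    have hA : Nontrivial A := by
      apply Module.nontrivial_of_finrank_pos (R := k)
      rw [hrank]; positivity
    obtain ⟨ψ, ψs, ψk, ψl, ψr⟩ := a1_ext φ hs _ hk (X (Fin.last (2 * m)) ^ (2 * Q))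
      (Polynomial.X ^ (2 * Q)) (by simp)
    rw [a1_set] at ψk
    obtain ⟨b1, hb1⟩ := a1_basis (A := A) Q
    set A1 := AdjoinRoot (Polynomial.X ^ (2 * Q) : Polynomial A) with hA1
    have : Nonempty (Fin Q) := ⟨⟨0, hQ⟩⟩
    have : Nontrivial A1 := b1.repr.toEquiv.nontrivial
    obtain ⟨χ, χs, χk, χl, χr⟩ := a1_ext ψ ψs _ ψk (X (Fin.last (2 * m + 1)) ^ (2 * Q))
      (Polynomial.X ^ (2 * Q)) (by simp)
    rw [a1_set] at χk
    obtain ⟨b2, hb2⟩ := a1_basis (A := A1) Q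
    set A2 := AdjoinRoot (Polynomial.X ^ (2 * Q) : Polynomial A1) with hA2
    let b := b1.smulTower b2
    set α : A1 := AdjoinRoot.root _ with hα
    set β : A2 := AdjoinRoot.root _ with hβ
    have hα0 : α ^ (2 * Q) = 0 := a1_root_pow _
    have hβ0 : β ^ (2 * Q) = 0 := a1_root_pow _
    let u : A2 := (algebraMap A1 A2 α * β) ^ Q
    have hb : ∀ x y, b (x, y) = algebraMap A1 A2 α ^ ((x.2 : ℕ) + Q * (x.1 : ℕ)) *
        β ^ ((y.2 : ℕ) + Q * (y.1 : ℕ)) := by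
      intro x y
      rw [Module.Basis.smulTower_apply, hb1, hb2, Algebra.smul_def, map_pow]
    have hα1 : algebraMap A1 A2 α ^ (2 * Q) = 0 := by rw [← map_pow, hα0, map_zero]
    have hT : χ (a1G k (m + 1) Q) = algebraMap A A2 (φ (a1G k m Q)) + u := by
      rw [a1G_succ, map_add, map_pow, map_mul, χr, χr, χl, ψr, ψl,
        IsScalarTower.algebraMap_apply A A1 A2]
    have hu0 : u * u = 0 := by
      have : u * u = algebraMap A1 A2 α ^ (2 * Q) * β ^ (2 * Q) := by simp only [u]; ring
      rw [this, hα1, zero_mul]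
    have htwo : (2 : A2) = 0 := by
      have h2 : (2 : k) = 0 := CharTwo.two_eq_zero
      have := congrArg (algebraMap k A2) h2
      rw [map_ofNat, map_zero] at this
      exact this
    have hfA2 : Module.Finite A A2 := Module.Finite.of_basis b
    refine ⟨A2, inferInstance, inferInstance, χ, χs, χk, Module.Finite.trans A A2, ?_, ?_, ?_⟩
    · have hfree : Module.Free A A2 := Module.Free.of_basis b
      rw [← Module.finrank_mul_finrank k A A2, hrank, Module.finrank_eq_card_basis b]
      simp
      ring
    · rw [hT]
      have : ∀ x : A2, (x + u) * (x + u) = x * x + 2 * (x * u) + u * u := fun x => by ring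
      rw [this, hu0, htwo, ← map_mul, ht]
      simp
    · rw [hT, a1_coker (k := k) b u ?_ ?_ ?_ _ ht, hrank]
      · simp only [Fintype.card_fin]
        rw [show 2 * (Q * Q * ((2 * Q) ^ (2 * m) +
          2 * Module.finrank k (A ⧸ Ideal.span {φ (a1G k m Q)}))) = 2 * Q * Q * ((2 * Q) ^ (2 * m) +
          2 * Module.finrank k (A ⧸ Ideal.span {φ (a1G k m Q)})) by ring, hc, mul_pow, pow_mul 2]
        ring
      · intro i j
        rw [hb, hb]; simp only [u]; simp; ring
      · intro i y
        rw [hb]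
        have : u * (algebraMap A1 A2 α ^ ((i : ℕ) + Q * 1) * β ^ ((y.2 : ℕ) + Q * (y.1 : ℕ))) =
          algebraMap A1 A2 α ^ (2 * Q) * (algebraMap A1 A2 α ^ (i : ℕ) * β ^ Q *
            β ^ ((y.2 : ℕ) + Q * (y.1 : ℕ))) := by simp only [u]; ring
        rw [hα1, zero_mul] at this
        exact this
      · intro x j
        rw [hb]
        have : u * (algebraMap A1 A2 α ^ ((x.2 : ℕ) + Q * (x.1 : ℕ)) * β ^ ((j : ℕ) + Q * 1)) =
          β ^ (2 * Q) * (algebraMap A1 A2 α ^ Q * algebraMap A1 A2 α ^ ((x.2 : ℕ) + Q * (x.1 : ℕ)) *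
            β ^ (j : ℕ)) := by simp only [u]; ring
        rw [hβ0, zero_mul] at this
        exact this

theorem a1_final (k : Type u) [Field k] [CharP k 2] (m e : ℕ) :
    HKfun k (2 * m + 1) 2 (e + 1)
      (rename Fin.castSucc (a1G k m 1) + X (Fin.last (2 * m)) ^ 2) =
      (2 ^ e) ^ (2 * m) * (4 ^ m + 2 ^ m) := by
  obtain ⟨A, _, _, φ, hs, hk, hfin, hrank, ht, hc⟩ := a1_tower k (2 ^ e) (by positivity) m
  have hG : a1G k m (2 ^ e) = a1G k m 1 ^ 2 ^ e := by
    unfold a1G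
    rw [sum_pow_char_pow 2]
    simp
  have h2e : 2 * 2 ^ e = 2 ^ (e + 1) := by ring
  rw [h2e] at hk
  rw [← hc]
  set g := a1G k m 1 with hg
  set I := Ideal.span {φ (a1G k m (2 ^ e))} with hI
  let φ' : MvPolynomial (Fin (2 * m)) k →ₐ[k] A ⧸ I := (Ideal.Quotient.mkₐ k I).comp φ
  have hφ's : Function.Surjective φ' := (Ideal.Quotient.mkₐ_surjective k I).comp hs
  have hφ'k : RingHom.ker φ' = Ideal.span ((Set.range fun i =>
      (X i : MvPolynomial (Fin (2 * m)) k) ^ 2 ^ (e + 1)) ∪ {g ^ 2 ^ e}) := by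
    rw [Ideal.span_union, ← hk, ← hG]
    ext p
    have : p ∈ RingHom.ker φ' ↔ p ∈ Ideal.comap φ (Ideal.map φ (Ideal.span {a1G k m (2 ^ e)})) := by
      rw [Ideal.map_span, Set.image_singleton, Ideal.mem_comap, RingHom.mem_ker]
      exact Ideal.Quotient.eq_zero_iff_mem
    rw [this, Ideal.comap_map_of_surjective φ hs, sup_comm]
    rfl
  obtain ⟨ψ, ψs, ψk, -, -⟩ := a1_ext φ' hφ's _ hφ'k (rename Fin.castSucc g + X (Fin.last (2 * m)) ^ 2)
      (Polynomial.X ^ 2 + Polynomial.C (φ' g)) (by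
        have : optionEquivLeft k (Fin (2 * m)) ((renameEquiv k finSuccEquivLast)
            (rename Fin.castSucc g)) = Polynomial.C g := by
          have h : (optionEquivLeft k (Fin (2 * m)) : _ →ₐ[k] _).comp
             ((renameEquiv k (finSuccEquivLast (n := 2 * m))).toAlgHom.comp (rename Fin.castSucc)) = 
            IsScalarTower.toAlgHom k (MvPolynomial (Fin (2 * m)) k)
              (Polynomial (MvPolynomial (Fin (2 * m)) k)) := by
            ext i : 1
            simp
          exact AlgHom.congr_fun h g
        rw [map_add, map_add, map_add, this]
        simp [add_comm])
  set z : MvPolynomial (Fin (2 * m + 1)) k := X (Fin.last (2 * m)) with hz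
  set G := rename (R := k) (Fin.castSucc (n := 2 * m)) g with hGG
  have hdvd : G + z ^ 2 ∣ z ^ 2 ^ (e + 1) - G ^ 2 ^ e := by
    have h := sub_dvd_pow_sub_pow (z ^ 2) G (2 ^ e)
    rw [← pow_mul, h2e, CharTwo.sub_eq_add (z ^ 2), add_comm (z ^ 2) G] at h
    exact h
  have hid : RingHom.ker ψ = Ideal.span (Set.range (fun i : Fin (2 * m + 1) =>
      (X i : MvPolynomial (Fin (2 * m + 1)) k) ^ 2 ^ (e + 1)) ∪ {G + z ^ 2}) := by
    rw [ψk, ← a1_set, Set.image_union, Set.image_singleton, map_pow]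
    obtain ⟨r, hr⟩ := hdvd
    apply le_antisymm
    · rw [Ideal.span_le]
      rintro x ((hx | rfl) | hx)
      · exact Ideal.subset_span (Or.inl (Or.inl hx))
      · have : G ^ 2 ^ e = z ^ 2 ^ (e + 1) - r * (G + z ^ 2) := by rw [mul_comm r, ← hr]; ring
        change G ^ 2 ^ e ∈ _
        rw [this]
        exact Ideal.sub_mem _ (Ideal.subset_span (Or.inl (Or.inr rfl)))
          (Ideal.mul_mem_left _ _ (Ideal.subset_span (Or.inr rfl)))
      · exact Ideal.subset_span (Or.inr hx)
    · rw [Ideal.span_le]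
      rintro x ((hx | rfl) | hx)
      · exact Ideal.subset_span (Or.inl (Or.inl hx))
      · have : z ^ 2 ^ (e + 1) = G ^ 2 ^ e + r * (G + z ^ 2) := by rw [mul_comm r, ← hr]; ring
        change z ^ 2 ^ (e + 1) ∈ _
        rw [this]
        exact Ideal.add_mem _ (Ideal.subset_span (Or.inl (Or.inr rfl)))
          (Ideal.mul_mem_left _ _ (Ideal.subset_span (Or.inr rfl)))
      · exact Ideal.subset_span (Or.inr hx)
  unfold HKfun
  rw [← hid, (Ideal.quotientKerAlgEquivOfSurjective ψs).toLinearEquiv.finrank_eq]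
  have hI1 : Nontrivial (A ⧸ I) := by
    apply Module.nontrivial_of_finrank_pos (R := k)
    have : 0 < (2 ^ e) ^ (2 * m) * (4 ^ m + 2 ^ m) := by positivity
    omega
  have hmon : (Polynomial.X ^ 2 + Polynomial.C (φ' g)).Monic :=
    Polynomial.monic_X_pow_add_C _ two_ne_zero
  have hfree := hmon.free_adjoinRoot
  rw [← Module.finrank_mul_finrank k (A ⧸ I), (AdjoinRoot.powerBasis' hmon).finrank,
    AdjoinRoot.powerBasis'_dim, Polynomial.natDegree_X_pow_add_C, mul_comm]

end A1aux


/-- Hilbert–Kunz function of the even-dimensional `A₁` singularity in characteristic 2: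
for `d = 2m`, `HK_e(R_{2,d}) = (2^m + 1) · 2^{m(2e−1)}`. -/
theorem HK_function_A1_char_two_even (k : Type*) [Field k] [CharP k 2]
    (m : ℕ) (hm : 1 ≤ m) (e : ℕ) (he : 1 ≤ e) :
    HKfun k (2 * m + 1) 2 e
        ((∑ i : Fin m,
            (X (⟨2 * i, by omega⟩ : Fin (2 * m + 1)) : MvPolynomial (Fin (2 * m + 1)) k) *
              X (⟨2 * i + 1, by omega⟩ : Fin (2 * m + 1))) +
          X (⟨2 * m, by omega⟩ : Fin (2 * m + 1)) ^ 2) =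
      (2 ^ m + 1) * 2 ^ (m * (2 * e - 1)) := by
  obtain ⟨e, rfl⟩ := Nat.exists_eq_add_of_le' he
  have h := a1_final k m e
  have hf : (rename (R := k) (Fin.castSucc (n := 2 * m)) (a1G k m 1) + X (Fin.last (2 * m)) ^ 2) =
      ((∑ i : Fin m,
            (X (⟨2 * i, by omega⟩ : Fin (2 * m + 1)) : MvPolynomial (Fin (2 * m + 1)) k) *
              X (⟨2 * i + 1, by omega⟩ : Fin (2 * m + 1))) +
          X (⟨2 * m, by omega⟩ : Fin (2 * m + 1)) ^ 2) := by
    unfold a1G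
    simp only [map_sum, map_pow, map_mul, rename_X, pow_one]
    rfl
  rw [hf] at h
  rw [h, show m * (2 * (e + 1) - 1) = e * (2 * m) + m by
    rw [show 2 * (e + 1) - 1 = 2 * e + 1 by omega]; ring, pow_add, pow_mul,
    show (4 : ℕ) = 2 * 2 by norm_num, mul_pow]
  ring
end

section
/- Let k be a field of characteristic 2 and d ≥ 1. The real sequence e ↦ dim_k( k[x_0,…,x_d]/(x_0^{2^e},…,x_d^{2^e}, Q_d) ) / 2^{d·e} converges as e → ∞; its limit (the Hilbert–Kunz multiplicity of the A_1 singularity in characteristic 2) equals 2^m/(2^m − 1) when d = 2m − 1 is odd, and equals (2^m + 1)/2^m when d = 2m is even. -/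
open MvPolynomial

/-- The defining equation `Q_d` of the `A₁` singularity in characteristic 2:
`Q_d = x_0x_1 + x_2x_3 + ⋯ + x_{d−1}x_d` for `d` odd and
`Q_d = x_0x_1 + ⋯ + x_{d−2}x_{d−1} + x_d²` for `d` even. -/
noncomputable def A1poly (k : Type*) [Field k] (d : ℕ) : MvPolynomial (Fin (d + 1)) k :=
  (∑ i : Fin ((d + 1) / 2),
      X (⟨2 * i, by omega⟩ : Fin (d + 1)) * X (⟨2 * i + 1, by omega⟩ : Fin (d + 1))) +
    if Even d then X (⟨d, by omega⟩ : Fin (d + 1)) ^ 2 else 0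



lemma fr_quot {k B : Type*} [Field k] [CommRing B] [Algebra k B] [FiniteDimensional k B]
    (I : Ideal B) :
    Module.finrank k (B ⧸ I) + Module.finrank k (I.restrictScalars k) = Module.finrank k B := by
  rw [← Submodule.finrank_quotient_add_finrank (I.restrictScalars k)]
  congr 1

lemma linkage {k B : Type*} [Field k] [CommRing B] [Algebra k B] [FiniteDimensional k B]
    (x y : B) (Q c : ℕ) (hx : x ^ Q = 0) (hy : y ^ Q = 0)
    (h1 : ∀ a ≤ Q, Module.finrank k (B ⧸ Ideal.span {x ^ a}) = c * a)
    (h2 : ∀ a ≤ Q, Module.finrank k (B ⧸ Ideal.span {y ^ a}) = c * a)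
    (a b : ℕ) (ha : a ≤ Q) (hb : b ≤ Q) :
    Module.finrank k (B ⧸ (Ideal.span {x ^ a} ⊔ Ideal.span {y ^ b})) + c * Q =
      c * a + c * b + Module.finrank k (B ⧸ (Ideal.span {x ^ (Q - a)} ⊔ Ideal.span {y ^ (Q - b)})) := by
  have hr : ∀ z : B, (Ideal.span {z}).restrictScalars k = LinearMap.range (LinearMap.mulLeft k z) := by
    intro z
    ext w
    simp [Ideal.mem_span_singleton', mul_comm]
  have hB : Module.finrank k B = c * Q := by
    rw [← h1 Q le_rfl, ← fr_quot (k := k) (Ideal.span {x ^ Q}), hx]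
    simp [hr]
  have hk : ∀ (z : B), z ^ Q = 0 → (∀ a ≤ Q, Module.finrank k (B ⧸ Ideal.span {z ^ a}) = c * a) →
      ∀ a ≤ Q, LinearMap.range (LinearMap.mulLeft k (z ^ a)) = LinearMap.ker (LinearMap.mulLeft k (z ^ (Q - a))) := by
    intro z hz h a ha
    apply Submodule.eq_of_le_of_finrank_eq
    · rintro _ ⟨w, rfl⟩
      simp only [LinearMap.mem_ker, LinearMap.mulLeft_apply]
      rw [← mul_assoc, ← pow_add, Nat.sub_add_cancel ha, hz, zero_mul]
    · have e1 := fr_quot (k := k) (Ideal.span {z ^ a})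
      have e2 := fr_quot (k := k) (Ideal.span {z ^ (Q - a)})
      have e3 := LinearMap.finrank_range_add_finrank_ker (LinearMap.mulLeft k (z ^ (Q - a)))
      rw [hr, h _ (by omega)] at e1 e2
      have : c * Q = c * a + c * (Q - a) := by rw [← mul_add]; congr 1; omega
      omega
  have kx := hk x hx h1
  have ky := hk y hy h2
  have q1 := fr_quot (k := k) (Ideal.span {x ^ a} ⊔ Ideal.span {y ^ b})
  have q2 := fr_quot (k := k) (Ideal.span {x ^ (Q - a)} ⊔ Ideal.span {y ^ (Q - b)})
  rw [Submodule.restrictScalars_sup, hr, hr] at q1 q2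
  have f1 := fr_quot (k := k) (Ideal.span {x ^ a})
  have f2 := fr_quot (k := k) (Ideal.span {y ^ b})
  rw [hr, h1 _ ha] at f1
  rw [hr, h2 _ hb] at f2
  set P := LinearMap.range (LinearMap.mulLeft k (x ^ a)) with hP
  set P' := LinearMap.range (LinearMap.mulLeft k (x ^ (Q - a))) with hP'
  set R := LinearMap.range (LinearMap.mulLeft k (y ^ b)) with hR
  set R' := LinearMap.range (LinearMap.mulLeft k (y ^ (Q - b))) with hR'
  have s1 := Submodule.finrank_sup_add_finrank_inf_eq P R
  have s2 := Submodule.finrank_sup_add_finrank_inf_eq P' R'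
  -- P ⊓ R = kernel of y^(Q-b) restricted to P
  have t1 : Module.finrank k (P ⊓ R : Submodule k B) +
      Module.finrank k (P.map (LinearMap.mulLeft k (y ^ (Q - b)))) = Module.finrank k P := by
    have := LinearMap.finrank_range_add_finrank_ker ((LinearMap.mulLeft k (y ^ (Q - b))).domRestrict P)
    rw [LinearMap.range_domRestrict, LinearMap.ker_domRestrict] at this
    rw [hR, ky b hb, ← this, add_comm]
    congr 1
    rw [inf_comm, ← Submodule.finrank_map_subtype_eq P]
    rw [Submodule.map_comap_subtype, inf_comm]
  have t2 : Module.finrank k (P' ⊓ R' : Submodule k B) +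
      Module.finrank k (R'.map (LinearMap.mulLeft k (x ^ a))) = Module.finrank k R' := by
    have := LinearMap.finrank_range_add_finrank_ker ((LinearMap.mulLeft k (x ^ a)).domRestrict R')
    rw [LinearMap.range_domRestrict, LinearMap.ker_domRestrict] at this
    rw [hP', kx (Q - a) (by omega), Nat.sub_sub_self ha, ← this, add_comm]
    congr 1
    rw [← Submodule.finrank_map_subtype_eq R']
    rw [Submodule.map_comap_subtype, inf_comm]
  have t3 : P.map (LinearMap.mulLeft k (y ^ (Q - b))) = R'.map (LinearMap.mulLeft k (x ^ a)) := by
    rw [hP, hR', ← LinearMap.range_comp, ← LinearMap.range_comp]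
    congr 1
    ext w
    simp [mul_left_comm]
  rw [t3] at t1
  have g1 := LinearMap.finrank_range_add_finrank_ker (LinearMap.mulLeft k (x ^ a))
  have g2 := kx (Q - a) (by omega)
  rw [Nat.sub_sub_self ha] at g2
  rw [← g2, ← hP, ← hP'] at g1
  omega

/-- ideal version -/
lemma linkage' {k R : Type*} [Field k] [CommRing R] [Algebra k R] (J : Ideal R)
    [FiniteDimensional k (R ⧸ J)]
    (x y : R) (Q c : ℕ) (hx : x ^ Q ∈ J) (hy : y ^ Q ∈ J)
    (h1 : ∀ a ≤ Q, Module.finrank k (R ⧸ J ⊔ Ideal.span {x ^ a}) = c * a)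
    (h2 : ∀ a ≤ Q, Module.finrank k (R ⧸ J ⊔ Ideal.span {y ^ a}) = c * a)
    (a b : ℕ) (ha : a ≤ Q) (hb : b ≤ Q) :
    Module.finrank k (R ⧸ J ⊔ (Ideal.span {x ^ a} ⊔ Ideal.span {y ^ b})) + c * Q =
      c * a + c * b + Module.finrank k (R ⧸ J ⊔ (Ideal.span {x ^ (Q - a)} ⊔ Ideal.span {y ^ (Q - b)})) := by
  have key : ∀ I : Ideal R, Module.finrank k (R ⧸ J ⊔ I) =
      Module.finrank k ((R ⧸ J) ⧸ I.map (Ideal.Quotient.mk J)) := fun I =>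
    ((DoubleQuot.quotQuotEquivQuotSupₐ k J I).toLinearEquiv.finrank_eq).symm
  have key1 : ∀ z : R, ∀ n : ℕ, (Ideal.span {z ^ n}).map (Ideal.Quotient.mk J) =
      Ideal.span {(Ideal.Quotient.mk J z) ^ n} := by
    intro z n
    rw [Ideal.map_span, Set.image_singleton, map_pow]
  have := linkage (k := k) (Ideal.Quotient.mk J x) (Ideal.Quotient.mk J y) Q c
    (by rw [← map_pow]; exact Ideal.Quotient.eq_zero_iff_mem.2 hx)
    (by rw [← map_pow]; exact Ideal.Quotient.eq_zero_iff_mem.2 hy)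
    (fun a ha => by rw [← key1, ← key, h1 a ha])
    (fun a ha => by rw [← key1, ← key, h2 a ha]) a b ha hb
  rw [key, key, Ideal.map_sup, Ideal.map_sup, key1, key1, key1, key1]
  exact this

/-- truncation ideal plus one equation -/
noncomputable def bI (k : Type*) [Field k] {σ : Type*} (b : σ → ℕ) (f : MvPolynomial σ k) :
    Ideal (MvPolynomial σ k) :=
  Ideal.span (Set.range (fun i : σ => (X i : MvPolynomial σ k) ^ b i) ∪ {f})

lemma bI_X {k : Type*} [Field k] {σ : Type*} (b : σ → ℕ) (f : MvPolynomial σ k) (i : σ) :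
    (X i : MvPolynomial σ k) ^ b i ∈ bI k b f :=
  Ideal.subset_span (Or.inl ⟨i, rfl⟩)

lemma bI_f {k : Type*} [Field k] {σ : Type*} (b : σ → ℕ) (f : MvPolynomial σ k) :
    f ∈ bI k b f :=
  Ideal.subset_span (Or.inr rfl)

lemma bI_monomial {k : Type*} [Field k] {σ : Type*} (b : σ → ℕ) (f : MvPolynomial σ k)
    (u : σ →₀ ℕ) (hu : ¬ ∀ s, u s < b s) : (monomial u (1 : k)) ∈ bI k b f := by
  push Not at hu
  obtain ⟨s, hs⟩ := hu
  have : u = (u - Finsupp.single s (b s)) + Finsupp.single s (b s) := by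
    rw [tsub_add_cancel_of_le]
    simpa using hs
  rw [this, ← mul_one (1 : k), ← monomial_mul]
  apply Ideal.mul_mem_left
  rw [← X_pow_eq_monomial]; exact bI_X b f s

lemma bI_finite {k : Type*} [Field k] {σ : Type*} [Finite σ] (b : σ → ℕ) (f : MvPolynomial σ k) :
    FiniteDimensional k (MvPolynomial σ k ⧸ bI k b f) := by
  classical
  let S : Set (MvPolynomial σ k ⧸ bI k b f) :=
    (fun u : σ →₀ ℕ => (Ideal.Quotient.mkₐ k (bI k b f)) (monomial u 1)) ''
      (Set.Iic (Finsupp.equivFunOnFinite.symm b))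
  have hS : S.Finite := (Set.finite_Iic _).image _
  have hall : ∀ u : σ →₀ ℕ, (Ideal.Quotient.mkₐ k (bI k b f)) (monomial u 1) ∈ Submodule.span k S := by
    intro u
    by_cases hu : ∀ s, u s < b s
    · apply Submodule.subset_span
      exact ⟨u, fun s => by simpa using (hu s).le, rfl⟩
    · have := bI_monomial (k := k) b f u hu
      rw [← Ideal.Quotient.eq_zero_iff_mem] at this
      simp only [Ideal.Quotient.mkₐ_eq_mk]
      rw [this]; exact zero_mem _
  refine ⟨⟨hS.toFinset, ?_⟩⟩
  rw [Set.Finite.coe_toFinset, eq_top_iff]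
  rintro x -
  obtain ⟨p, rfl⟩ := Ideal.Quotient.mkₐ_surjective k (bI k b f) x
  induction p using MvPolynomial.induction_on' with
  | monomial u a =>
    have : monomial u a = a • monomial u (1 : k) := by simp [smul_monomial]
    rw [this, map_smul]
    exact Submodule.smul_mem _ _ (hall u)
  | add p q hp hq => rw [map_add]; exact add_mem hp hq

lemma bI_kill {k : Type*} [Field k] {σ : Type*} {V : Type*} [AddCommGroup V] [Module k V]
    (b : σ → ℕ) (f : MvPolynomial σ k)
    (g : MvPolynomial σ k →ₗ[k] V)
    (h1 : ∀ u s, g (monomial u 1 * X s ^ b s) = 0)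
    (h2 : ∀ u, g (monomial u 1 * f) = 0) : (bI k b f).restrictScalars k ≤ LinearMap.ker g := by
  intro x hx
  have aux : ∀ y, (∀ u, g (monomial u 1 * y) = 0) → ∀ r, g (r * y) = 0 := by
    intro y hy r
    induction r using MvPolynomial.induction_on' with
    | monomial u a =>
      have : monomial u a = a • monomial u (1 : k) := by simp [smul_monomial]
      rw [this, smul_mul_assoc, map_smul, hy, smul_zero]
    | add p q hp hq => rw [add_mul, map_add, hp, hq, add_zero]
  have key : ∀ x ∈ bI k b f, ∀ r, g (r * x) = 0 := by
    intro x hx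
    induction hx using Submodule.span_induction with
    | mem x hx =>
      rcases hx with ⟨s, rfl⟩ | rfl
      · exact aux _ (fun u => h1 u s)
      · exact aux _ h2
    | zero => simp
    | add x y _ _ hx hy => intro r; rw [mul_add, map_add, hx, hy, add_zero]
    | smul a x _ hx => intro r; rw [smul_eq_mul, ← mul_assoc]; exact hx _
  have := key x hx 1
  rwa [one_mul] at this

lemma fr_rs {k B : Type*} [Field k] [CommRing B] [Algebra k B] (I : Ideal B) :
    Module.finrank k (B ⧸ I) = Module.finrank k (B ⧸ I.restrictScalars k) := rfl

theorem decomp {k : Type*} [Field k] {σ ι C : Type*} [Finite σ] [Fintype ι] [Fintype C]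
    (b : σ → ℕ) (L : (ι →₀ ℕ) →+ (σ →₀ ℕ)) (st : C → σ →₀ ℕ) (len : C → ι → ℕ)
    (ch : (σ →₀ ℕ) → C) (pos : (σ →₀ ℕ) → ι →₀ ℕ)
    (h1 : ∀ u : σ →₀ ℕ, (∀ s, u s < b s) → st (ch u) + L (pos u) = u)
    (h2 : ∀ c p, (∀ s, (st c + L p) s < b s) ↔ ∀ i, p i < len c i)
    (h3 : ∀ c p, (∀ i, p i < len c i) → ch (st c + L p) = c ∧ pos (st c + L p) = p) :
    Module.finrank k (MvPolynomial σ k ⧸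
        bI k b (∑ i, monomial (L (Finsupp.single i 1)) (1 : k))) =
      ∑ c, Module.finrank k (MvPolynomial ι k ⧸ bI k (len c) (∑ i, X i)) := by
  classical
  set F : MvPolynomial σ k := ∑ i, monomial (L (Finsupp.single i 1)) (1 : k) with hF
  set I := bI k b F with hI
  let J : C → Ideal (MvPolynomial ι k) := fun c => bI k (len c) (∑ i, X i)
  have hfin : ∀ c, FiniteDimensional k (MvPolynomial ι k ⧸ (J c).restrictScalars k) :=
    fun c => bI_finite (len c) _
  have hrhs : ∑ c, Module.finrank k (MvPolynomial ι k ⧸ bI k (len c) (∑ i, X i)) =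
      Module.finrank k (∀ c, MvPolynomial ι k ⧸ (J c).restrictScalars k) := by
    rw [Module.finrank_pi_fintype]
    rfl
  rw [hrhs, fr_rs]
  -- the map Ψ
  let ψ : (σ →₀ ℕ) → (∀ c, MvPolynomial ι k ⧸ (J c).restrictScalars k) := fun u =>
    if (∀ s, u s < b s) then
      Pi.single (ch u) (((J (ch u)).restrictScalars k).mkQ (monomial (pos u) 1)) else 0
  let Ψ : MvPolynomial σ k →ₗ[k] (∀ c, MvPolynomial ι k ⧸ (J c).restrictScalars k) :=
    (basisMonomials σ k).constr k ψ
  have hΨ : ∀ u, Ψ (monomial u 1) = ψ u := by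
    intro u
    have := (basisMonomials σ k).constr_basis k ψ u
    rwa [coe_basisMonomials] at this
  -- value of ψ on start + L p
  have hψ : ∀ c p, ψ (st c + L p) = Pi.single c (((J c).restrictScalars k).mkQ (monomial p 1)) := by
    intro c p
    by_cases hp : ∀ i, p i < len c i
    · obtain ⟨e1, e2⟩ := h3 c p hp
      simp only [ψ]
      rw [if_pos ((h2 c p).2 hp), e1, e2]
    · simp only [ψ]
      rw [if_neg (by rwa [h2])]
      have : ((J c).restrictScalars k).mkQ (monomial p (1 : k)) = 0 := by
        rw [Submodule.mkQ_apply, Submodule.Quotient.mk_eq_zero]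
        exact bI_monomial _ _ p hp
      rw [this, Pi.single_zero]
  have hbad : ∀ u, (¬ ∀ s, u s < b s) → ψ u = 0 := fun u hu => by simp only [ψ]; rw [if_neg hu]
  have kΨ : I.restrictScalars k ≤ LinearMap.ker Ψ := by
    apply bI_kill
    · intro u s
      rw [X_pow_eq_monomial, monomial_mul, mul_one, hΨ]
      apply hbad
      intro h
      have := h s
      simp at this
    · intro u
      rw [hF, Finset.mul_sum, map_sum]
      simp only [monomial_mul, mul_one, hΨ]
      by_cases hu : ∀ s, u s < b s
      · have : ∀ i, ψ (u + L (Finsupp.single i 1)) = Pi.single (ch u)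
            (((J (ch u)).restrictScalars k).mkQ (monomial (pos u + Finsupp.single i 1) 1)) := by
          intro i
          rw [← hψ, map_add, ← add_assoc, h1 u hu]
        simp only [this]
        have e : ∀ v : ι → (MvPolynomial ι k ⧸ (J (ch u)).restrictScalars k),
            ∑ i, (Pi.single (ch u) (v i) : ∀ c, MvPolynomial ι k ⧸ (J c).restrictScalars k) =
              Pi.single (ch u) (∑ i, v i) := by
          intro v
          exact (map_sum (AddMonoidHom.single (fun c => MvPolynomial ι k ⧸ (J c).restrictScalars k) (ch u)) v _).symm
        rw [e, ← map_sum]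
        have : ((J (ch u)).restrictScalars k).mkQ
            (∑ i, monomial (pos u + Finsupp.single i 1) (1 : k)) = 0 := by
          rw [Submodule.mkQ_apply, Submodule.Quotient.mk_eq_zero]
          have : ∑ i, monomial (pos u + Finsupp.single i 1) (1 : k) =
              monomial (pos u) 1 * ∑ i, X i := by
            rw [Finset.mul_sum]
            refine Finset.sum_congr rfl fun i _ => ?_
            rw [X, monomial_mul, mul_one]
          rw [this]
          exact Ideal.mul_mem_left _ _ (bI_f _ _)
        rw [this, Pi.single_zero]
      · apply Finset.sum_eq_zero
        intro i _
        apply hbad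
        intro h
        apply hu
        intro s
        have := h s
        simp only [Finsupp.add_apply] at this
        omega
  -- the maps Φ
  let φ : ∀ c : C, MvPolynomial ι k →ₗ[k] (MvPolynomial σ k ⧸ I.restrictScalars k) := fun c =>
    (basisMonomials ι k).constr k (fun p => (I.restrictScalars k).mkQ (monomial (st c + L p) 1))
  have hφ : ∀ c p, φ c (monomial p 1) = (I.restrictScalars k).mkQ (monomial (st c + L p) 1) := by
    intro c p
    have := (basisMonomials ι k).constr_basis k
      (fun p => (I.restrictScalars k).mkQ (monomial (st c + L p) 1)) p
    rwa [coe_basisMonomials] at this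
  have kφ : ∀ c, (J c).restrictScalars k ≤ LinearMap.ker (φ c) := by
    intro c
    apply bI_kill
    · intro p i
      rw [X_pow_eq_monomial, monomial_mul, mul_one, hφ, Submodule.mkQ_apply,
        Submodule.Quotient.mk_eq_zero]
      apply bI_monomial
      rw [h2]
      intro h
      have := h i
      simp at this
    · intro p
      rw [Finset.mul_sum, map_sum]
      have : ∀ i, φ c (monomial p 1 * X i) = (I.restrictScalars k).mkQ
          (monomial (st c + L p) 1 * monomial (L (Finsupp.single i 1)) 1) := by
        intro i
        rw [X, monomial_mul, mul_one, hφ, monomial_mul, mul_one, map_add, add_assoc]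
      simp only [this]
      rw [← map_sum, ← Finset.mul_sum, Submodule.mkQ_apply, Submodule.Quotient.mk_eq_zero]
      exact Ideal.mul_mem_left _ _ (bI_f _ _)
  let Ψ' := (I.restrictScalars k).liftQ Ψ kΨ
  let Φ' : (∀ c, MvPolynomial ι k ⧸ (J c).restrictScalars k) →ₗ[k]
      (MvPolynomial σ k ⧸ I.restrictScalars k) :=
    ∑ c, (((J c).restrictScalars k).liftQ (φ c) (kφ c)) ∘ₗ LinearMap.proj c
  have hΦ' : ∀ c p, Φ' (Pi.single c (((J c).restrictScalars k).mkQ (monomial p 1))) =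
      (I.restrictScalars k).mkQ (monomial (st c + L p) 1) := by
    intro c p
    simp only [Φ', LinearMap.sum_apply, LinearMap.comp_apply, LinearMap.proj_apply]
    rw [Finset.sum_eq_single c]
    · rw [Pi.single_eq_same, Submodule.mkQ_apply, Submodule.liftQ_apply, hφ]
    · intro c' _ hc
      rw [Pi.single_eq_of_ne hc, map_zero]
    · simp
  refine (LinearEquiv.ofLinearMap Ψ' Φ' ?_ ?_).finrank_eq
  · apply LinearMap.pi_ext'
    intro c
    apply Submodule.linearMap_qext
    apply (basisMonomials ι k).ext
    intro p
    simp only [coe_basisMonomials, LinearMap.comp_apply, LinearMap.coe_single, LinearMap.id_apply]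
    rw [hΦ']
    simp only [Ψ']
    rw [Submodule.mkQ_apply, Submodule.liftQ_apply, hΨ, hψ]
  · apply Submodule.linearMap_qext
    apply (basisMonomials σ k).ext
    intro u
    simp only [coe_basisMonomials, LinearMap.comp_apply, LinearMap.id_apply]
    simp only [Ψ']
    rw [Submodule.mkQ_apply, Submodule.liftQ_apply, hΨ]
    by_cases hu : ∀ s, u s < b s
    · simp only [ψ]
      rw [if_pos hu, hΦ', h1 u hu]
      rfl
    · rw [hbad u hu, map_zero]
      symm
      rw [Submodule.Quotient.mk_eq_zero]
      exact bI_monomial _ _ u hu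

def Wc (r : Finset ℕ) (s : ℕ) : ℤ := ∏ j ∈ r, if s.testBit j then -1 else 1
def Sc (r : Finset ℕ) (a : ℕ) : ℤ := ∑ s ∈ Finset.range a, Wc r s

lemma Wc_insert_lt (e : ℕ) (r : Finset ℕ) (hr : r ⊆ Finset.range e) (s : ℕ) (hs : s < 2 ^ e) :
    Wc (insert e r) s = Wc r s := by
  have : e ∉ r := fun h => by simpa using hr h
  rw [Wc, Finset.prod_insert this, Nat.testBit_lt_two_pow hs]
  simp [Wc]

lemma Wc_add (e : ℕ) (r : Finset ℕ) (hr : r ⊆ Finset.range e) (s : ℕ) :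
    Wc r (2 ^ e + s) = Wc r s := by
  refine Finset.prod_congr rfl fun j hj => ?_
  rw [Nat.testBit_two_pow_add_gt (by simpa using hr hj)]

lemma Wc_insert_add (e : ℕ) (r : Finset ℕ) (hr : r ⊆ Finset.range e) (s : ℕ) (hs : s < 2 ^ e) :
    Wc (insert e r) (2 ^ e + s) = - Wc r s := by
  have : e ∉ r := fun h => by simpa using hr h
  rw [Wc, Finset.prod_insert this, Nat.testBit_two_pow_add_eq, Nat.testBit_lt_two_pow hs]
  have := Wc_add e r hr s
  rw [Wc] at this
  rw [this]
  simp

lemma Sc_zero (r : Finset ℕ) : Sc r 0 = 0 := by simp [Sc]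
lemma Sc_empty (a : ℕ) : Sc ∅ a = a := by simp [Sc, Wc]

lemma Sc_insert_le (e : ℕ) (r : Finset ℕ) (hr : r ⊆ Finset.range e) (a : ℕ) (ha : a ≤ 2 ^ e) :
    Sc (insert e r) a = Sc r a :=
  Finset.sum_congr rfl fun s hs => Wc_insert_lt e r hr s (by simp at hs; omega)

lemma Sc_add (e : ℕ) (r : Finset ℕ) (hr : r ⊆ Finset.range e) (a : ℕ) :
    Sc r (2 ^ e + a) = Sc r (2 ^ e) + Sc r a := by
  rw [Sc, Finset.sum_range_add]
  congr 1
  exact Finset.sum_congr rfl fun s _ => Wc_add e r hr s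

lemma Sc_insert_add (e : ℕ) (r : Finset ℕ) (hr : r ⊆ Finset.range e) (a : ℕ) (ha : a ≤ 2 ^ e) :
    Sc (insert e r) (2 ^ e + a) = Sc r (2 ^ e) - Sc r a := by
  rw [Sc, Finset.sum_range_add, sub_eq_add_neg]
  congr 1
  · exact Sc_insert_le e r hr _ le_rfl
  · rw [Sc, ← Finset.sum_neg_distrib]
    exact Finset.sum_congr rfl fun s hs => Wc_insert_add e r hr s (by simp at hs; omega)

lemma Sc_full (e : ℕ) (r : Finset ℕ) (hr : r ⊆ Finset.range e) (hne : r ≠ ∅) :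
    Sc r (2 ^ e) = 0 := by
  induction e generalizing r with
  | zero => simp at hr; exact absurd hr hne
  | succ e ih =>
    rw [pow_succ, mul_two]
    by_cases he : e ∈ r
    · have h := Finset.insert_erase he
      have hs : r.erase e ⊆ Finset.range e := by
        intro x hx
        have := hr (Finset.mem_of_mem_erase hx)
        have := Finset.ne_of_mem_erase hx
        simp at *
        omega
      rw [← h, Sc_insert_add e _ hs _ le_rfl, sub_self]
    · have hs : r ⊆ Finset.range e := by
        intro x hx
        have := hr hx
        have : x ≠ e := fun h => he (h ▸ hx)
        simp at *
        omega
      rw [Sc_add e r hs, ih r hs hne, add_zero]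

lemma Sc_flip (e : ℕ) (r : Finset ℕ) (hr : r ⊆ Finset.range e) (a : ℕ) (ha : a ≤ 2 ^ e) :
    Sc r (2 ^ e) - Sc r a = (-1) ^ r.card * Sc r (2 ^ e - a) := by
  have h : Sc r (2 ^ e) = Sc r a + ∑ i ∈ Finset.range (2 ^ e - a), Wc r (a + i) := by
    conv_lhs => rw [← Nat.add_sub_of_le ha, Sc, Finset.sum_range_add]
    rfl
  rw [h, add_sub_cancel_left, ← Finset.sum_range_reflect, Sc, Finset.mul_sum]
  refine Finset.sum_congr rfl fun s hs => ?_
  have hs : s < 2 ^ e - a := by simpa using hs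
  have : a + (2 ^ e - a - 1 - s) = 2 ^ e - (s + 1) := by omega
  rw [this, Wc, Wc, ← Finset.prod_const, ← Finset.prod_mul_distrib]
  refine Finset.prod_congr rfl fun j hj => ?_
  rw [Nat.testBit_two_pow_sub_succ (by omega)]
  have : j < e := by simpa using hr hj
  cases s.testBit j <;> simp [this]

lemma Sc_flip2 (e : ℕ) (r : Finset ℕ) (hr : r ⊆ Finset.range e) (hne : r ≠ ∅) (a b : ℕ)
    (ha : a ≤ 2 ^ e) (hb : b ≤ 2 ^ e) :
    Sc r a * Sc r b = Sc r (2 ^ e - a) * Sc r (2 ^ e - b) := by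
  have h1 := Sc_flip e r hr a ha
  have h2 := Sc_flip e r hr b hb
  rw [Sc_full e r hr hne] at h1 h2
  have h3 : ((-1 : ℤ) ^ r.card) * (-1) ^ r.card = 1 := by
    rw [← mul_pow]; simp
  have : Sc r a * Sc r b = (0 - Sc r a) * (0 - Sc r b) := by ring
  rw [this, h1, h2]
  linear_combination (Sc r (2 ^ e - a) * Sc r (2 ^ e - b)) * h3

lemma pow_sum_succ (e : ℕ) (f : Finset ℕ → ℤ) :
    ∑ r ∈ (Finset.range (e + 1)).powerset, f r =
      ∑ r ∈ (Finset.range e).powerset, (f r + f (insert e r)) := by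
  rw [Finset.range_add_one, Finset.sum_powerset_insert (by simp), Finset.sum_add_distrib]

/-- pair sum -/
def Fc (e : ℕ) (r : Finset ℕ) : ℤ :=
  Sc r (2 ^ e) + 2 * ∑ a ∈ Finset.range (2 ^ e), Sc r a

lemma Fc_succ (e : ℕ) (r : Finset ℕ) (hr : r ⊆ Finset.range e) :
    Fc (e + 1) r = 2 * Fc e r + 2 * 2 ^ e * Sc r (2 ^ e) := by
  rw [Fc, Fc, pow_succ, mul_two, Finset.sum_range_add, Sc_add e r hr]
  simp only [Sc_add e r hr, Finset.sum_add_distrib, Finset.sum_const, Finset.card_range, nsmul_eq_mul]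
  push_cast
  ring

lemma Fc_insert (e : ℕ) (r : Finset ℕ) (hr : r ⊆ Finset.range e) :
    Fc (e + 1) (insert e r) = 2 * 2 ^ e * Sc r (2 ^ e) := by
  rw [Fc, pow_succ, mul_two, Finset.sum_range_add, Sc_insert_add e r hr _ le_rfl]
  have h1 : ∑ x ∈ Finset.range (2 ^ e), Sc (insert e r) x = ∑ x ∈ Finset.range (2 ^ e), Sc r x :=
    Finset.sum_congr rfl fun s hs => Sc_insert_le e r hr s (by simp at hs; omega)
  have h2 : ∑ x ∈ Finset.range (2 ^ e), Sc (insert e r) (2 ^ e + x) =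
      ∑ x ∈ Finset.range (2 ^ e), (Sc r (2 ^ e) - Sc r x) :=
    Finset.sum_congr rfl fun s hs => Sc_insert_add e r hr s (by simp at hs; omega)
  rw [h1, h2, Finset.sum_sub_distrib]
  simp only [Finset.sum_const, Finset.card_range, nsmul_eq_mul]
  push_cast
  ring

lemma Fc_empty (e : ℕ) : Fc e ∅ = 4 ^ e := by
  induction e with
  | zero => simp [Fc, Sc_empty]
  | succ e ih =>
    rw [Fc_succ e ∅ (by simp), ih, Sc_empty]
    push_cast
    have : (4 : ℤ) ^ e = 2 ^ e * 2 ^ e := by rw [← mul_pow]; norm_num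
    rw [pow_succ, this]; ring

lemma Zc_zero (m : ℕ) : ∑ r ∈ (Finset.range 0).powerset, Fc 0 r ^ m = 1 := by
  simp [Fc, Sc_empty]

lemma Zc_succ (m e : ℕ) (hm : m ≠ 0) :
    ∑ r ∈ (Finset.range (e + 1)).powerset, Fc (e + 1) r ^ m =
      2 ^ m * ∑ r ∈ (Finset.range e).powerset, Fc e r ^ m + 4 ^ (m * (e + 1)) := by
  rw [pow_sum_succ, Finset.mul_sum]
  rw [← Finset.add_sum_erase _ _ (Finset.empty_mem_powerset (Finset.range e)),
    ← Finset.add_sum_erase _ (fun r => 2 ^ m * Fc e r ^ m) (Finset.empty_mem_powerset (Finset.range e))]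
  have : ∀ r ∈ (Finset.range e).powerset.erase ∅, Fc (e + 1) r ^ m + Fc (e + 1) (insert e r) ^ m =
      2 ^ m * Fc e r ^ m := by
    intro r hr
    simp only [Finset.mem_erase, Finset.mem_powerset] at hr
    rw [Fc_succ e r hr.2, Fc_insert e r hr.2, Sc_full e r hr.2 hr.1]
    simp [hm, mul_pow]
  rw [Finset.sum_congr rfl this, Fc_empty, Fc_insert e ∅ (by simp), Fc_empty, Sc_empty]
  have h4 : (4 : ℤ) ^ e = 2 ^ e * 2 ^ e := by rw [← mul_pow]; norm_num
  push_cast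
  rw [show (2 : ℤ) * 2 ^ e * 2 ^ e = 2 * 4 ^ e by rw [h4]; ring, mul_pow, pow_mul']
  ring

lemma Zc_even (m e : ℕ) :
    ∑ r ∈ (Finset.range (e + 1)).powerset, Fc (e + 1) r ^ m * (2 * Sc r (2 ^ e)) =
      2 ^ (e + 1) * (4 ^ ((e + 1) * m) + 2 ^ m * 4 ^ (e * m)) := by
  rw [pow_sum_succ]
  rw [Finset.sum_eq_single ∅]
  · rw [Sc_insert_le e ∅ (by simp) _ le_rfl, Fc_empty, Fc_insert e ∅ (by simp), Sc_empty]
    have h4 : (4 : ℤ) ^ e = 2 ^ e * 2 ^ e := by rw [← mul_pow]; norm_num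
    push_cast
    rw [show (2 : ℤ) * 2 ^ e * 2 ^ e = 2 * 4 ^ e by rw [h4]; ring, mul_pow, ← pow_mul, ← pow_mul]
    ring
  · intro r hr hne
    simp only [Finset.mem_powerset] at hr
    rw [Sc_insert_le e r hr _ le_rfl, Sc_full e r hr hne]
    simp
  · simp


lemma monoDim {k : Type*} [Field k] {σ : Type*} [Fintype σ] (a : σ → ℕ) :
    Module.finrank k (MvPolynomial σ k ⧸ bI k a 0) = ∏ s, a s := by
  classical
  by_cases h0 : ∃ s, a s = 0
  · obtain ⟨s, hs⟩ := h0
    rw [Finset.prod_eq_zero (Finset.mem_univ s) hs]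
    have : bI k a 0 = ⊤ := by
      rw [Ideal.eq_top_iff_one]
      have := bI_X (k := k) a 0 s
      rwa [hs, pow_zero] at this
    rw [this]
    have : Subsingleton (MvPolynomial σ k ⧸ (⊤ : Ideal (MvPolynomial σ k))) :=
      Ideal.Quotient.subsingleton_iff.2 rfl
    exact Module.finrank_zero_of_subsingleton
  · push Not at h0
    have hd := decomp (k := k) (σ := σ) (ι := Fin 0) (C := ∀ s, Fin (a s)) a 0
      (fun c => Finsupp.equivFunOnFinite.symm fun s => (c s : ℕ)) (fun _ _ => 0)
      (fun u s => ⟨min (u s) (a s - 1), by have := h0 s; omega⟩) (fun _ => 0)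
      (by
        intro u hu
        ext s
        have := hu s
        simp
        omega)
      (by
        intro c p
        simp)
      (by
        intro c p _
        constructor
        · ext s
          have := (c s).2
          simp
          omega
        · ext s; exact s.elim0)
    rw [Fin.sum_univ_zero, Fin.sum_univ_zero] at hd
    simp only [Finset.sum_const, Finset.card_univ, Fintype.card_pi, Fintype.card_fin] at hd
    rw [hd]
    have : bI k (fun _ : Fin 0 => 0) 0 = ⊥ := by
      rw [bI, Ideal.span_eq_bot]
      rintro x (⟨s, -⟩ | rfl)
      · exact s.elim0
      · rfl
    rw [this, (AlgEquiv.quotientBot k (MvPolynomial (Fin 0) k)).toLinearEquiv.finrank_eq,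
      (isEmptyAlgEquiv k (Fin 0)).toLinearEquiv.finrank_eq]
    simp

lemma bI_sup {k : Type*} [Field k] {σ : Type*} [DecidableEq σ] (a : σ → ℕ) (f : MvPolynomial σ k)
    (i : σ) (n : ℕ) (hn : n ≤ a i) :
    bI k a f ⊔ Ideal.span {X i ^ n} = bI k (Function.update a i n) f := by
  apply le_antisymm
  · apply sup_le
    · apply Ideal.span_le.2
      rintro x (⟨s, rfl⟩ | rfl)
      · by_cases hs : s = i
        · subst hs
          have := bI_X (k := k) (Function.update a s n) f s
          rw [Function.update_self] at this
          exact Ideal.mem_of_dvd _ (pow_dvd_pow _ hn) this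
        · have := bI_X (k := k) (Function.update a i n) f s
          rwa [Function.update_of_ne hs] at this
      · exact bI_f _ _
    · rw [Ideal.span_singleton_le_iff_mem]
      have := bI_X (k := k) (Function.update a i n) f i
      rwa [Function.update_self] at this
  · apply Ideal.span_le.2
    rintro x (⟨s, rfl⟩ | rfl)
    · by_cases hs : s = i
      · subst hs
        simp only [Function.update_self]
        exact Ideal.mem_sup_right (Ideal.subset_span rfl)
      · simp only [Function.update_of_ne hs]
        exact Ideal.mem_sup_left (bI_X _ _ _)
    · exact Ideal.mem_sup_left (bI_f _ _)

lemma elimDim {k : Type*} [Field k] [CharP k 2] {ι : Type*} [Fintype ι] [DecidableEq ι]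
    (e : ℕ) (a : ι → ℕ) (ha : ∀ i, a i ≤ 2 ^ e) (j : ι) (hj : a j = 2 ^ e) :
    Module.finrank k (MvPolynomial ι k ⧸ bI k a (∑ i, X i)) = ∏ i, Function.update a j 1 i := by
  have : ExpChar (MvPolynomial ι k) 2 := ExpChar.prime Nat.prime_two
  let g : MvPolynomial ι k →ₐ[k] MvPolynomial ι k :=
    aeval (fun i => if i = j then ∑ i, X i else X i)
  have gne : ∀ i, i ≠ j → g (X i) = X i := fun i hi => by simp [g, hi]
  have gj : g (X j) = ∑ i, X i := by simp [g]
  have two : ∀ x : MvPolynomial ι k, x + x = 0 := CharTwo.add_self_eq_zero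
  have gs : g (∑ i, X i) = X j := by
    rw [map_sum, ← Finset.add_sum_erase _ _ (Finset.mem_univ j), gj,
      Finset.sum_congr rfl (fun i hi => gne i (Finset.ne_of_mem_erase hi)),
      ← Finset.add_sum_erase _ _ (Finset.mem_univ j), add_assoc, two, add_zero]
  have gg : g.comp g = AlgHom.id k _ := by
    ext1 i
    by_cases hi : i = j
    · subst hi
      simp [gj, gs, -map_sum]
    · simp [gne i hi]
  let G : MvPolynomial ι k ≃ₐ[k] MvPolynomial ι k := AlgEquiv.ofAlgHom g g gg gg
  have hG : bI k (Function.update a j 1) 0 = (bI k a (∑ i, X i)).map (G : MvPolynomial ι k →+* MvPolynomial ι k) := by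
    have hGg : ∀ x, (G : MvPolynomial ι k →+* MvPolynomial ι k) x = g x := fun x => rfl
    have hXj : X j ∈ bI k (Function.update a j 1) 0 := by
      have := bI_X (k := k) (Function.update a j 1) 0 j
      rwa [Function.update_self, pow_one] at this
    have hXi : ∀ i, i ≠ j → X i ^ a i ∈ bI k (Function.update a j 1) 0 := fun i hi => by
      have := bI_X (k := k) (Function.update a j 1) 0 i
      rwa [Function.update_of_ne hi] at this
    apply le_antisymm
    · apply Ideal.span_le.2
      rintro x (⟨i, rfl⟩ | rfl)
      · by_cases hi : i = j
        · subst hi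
          simp only [Function.update_self, pow_one]
          rw [← gs, ← hGg]
          exact Ideal.mem_map_of_mem _ (bI_f _ _)
        · simp only [Function.update_of_ne hi]
          rw [← gne i hi, ← map_pow, ← hGg]
          exact Ideal.mem_map_of_mem _ (bI_X _ _ _)
      · exact zero_mem _
    · rw [Ideal.map_le_iff_le_comap]
      apply Ideal.span_le.2
      rintro x (⟨i, rfl⟩ | rfl)
      · by_cases hi : i = j
        · subst hi
          simp only [SetLike.mem_coe, Ideal.mem_comap]
          rw [hGg, map_pow, gj, hj, sum_pow_char_pow]
          refine sum_mem fun s _ => ?_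
          by_cases hs : s = i
          · subst hs
            exact Ideal.pow_mem_of_mem _ hXj _ (by positivity)
          · exact Ideal.mem_of_dvd _ (pow_dvd_pow _ (ha s)) (hXi s hs)
        · simp only [SetLike.mem_coe, Ideal.mem_comap]
          rw [hGg, map_pow, gne i hi]
          exact hXi i hi
      · simp only [SetLike.mem_coe, Ideal.mem_comap]
        rw [hGg, gs]
        exact hXj
  rw [(Ideal.quotientEquivAlg _ _ G hG).toLinearEquiv.finrank_eq, monoDim]

lemma prod_upd2 {ι M : Type*} [CommMonoid M] [Fintype ι] [DecidableEq ι] (a : ι → ℕ) (S : ℕ → M) (i j : ι) (hij : i ≠ j)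
    (n m : ℕ) :
    ∏ s, S (Function.update (Function.update a i n) j m s) =
      (S n * S m) * ∏ s ∈ (Finset.univ.erase i).erase j, S (a s) := by
  rw [← Finset.mul_prod_erase _ _ (Finset.mem_univ i),
    ← Finset.mul_prod_erase (Finset.univ.erase i) _ (Finset.mem_erase.2 ⟨hij.symm, Finset.mem_univ j⟩)]
  rw [Function.update_self, Function.update_of_ne hij, Function.update_self, mul_assoc]
  congr 2
  refine Finset.prod_congr rfl fun s hs => ?_
  simp only [Finset.mem_erase] at hs
  rw [Function.update_of_ne hs.1, Function.update_of_ne hs.2.1]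

lemma flipDim {k : Type*} [Field k] [CharP k 2] {ι : Type*} [Fintype ι] [DecidableEq ι]
    (e : ℕ) (a : ι → ℕ) (ha : ∀ i, a i ≤ 2 ^ e) (i j : ι) (hij : i ≠ j)
    (n m : ℕ) (hn : n ≤ 2 ^ e) (hm : m ≤ 2 ^ e) (c : ℕ)
    (hc : c = ∏ s ∈ (Finset.univ.erase i).erase j, a s) :
    Module.finrank k (MvPolynomial ι k ⧸
        bI k (Function.update (Function.update a i n) j m) (∑ i, X i)) + c * 2 ^ e =
      c * n + c * m + Module.finrank k (MvPolynomial ι k ⧸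
        bI k (Function.update (Function.update a i (2 ^ e - n)) j (2 ^ e - m)) (∑ i, X i)) := by
  set A := Function.update (Function.update a i (2 ^ e)) j (2 ^ e) with hA
  have hAi : A i = 2 ^ e := by rw [hA, Function.update_of_ne hij, Function.update_self]
  have hAj : A j = 2 ^ e := by rw [hA, Function.update_self]
  have hle : ∀ s, A s ≤ 2 ^ e := by
    intro s
    by_cases hs : s = j
    · rw [hs, hAj]
    · by_cases hs' : s = i
      · rw [hs', hAi]
      · rw [hA, Function.update_of_ne hs, Function.update_of_ne hs']; exact ha s
  have := bI_finite (k := k) A (∑ i, X i)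
  have e1 : ∀ n, Function.update A i n = Function.update (Function.update a i n) j (2 ^ e) := by
    intro n
    rw [hA, Function.update_comm hij.symm, Function.update_idem]
  have e2 : ∀ m, Function.update A j m = Function.update (Function.update a i (2 ^ e)) j m := by
    intro m
    rw [hA, Function.update_idem]
  have hsup : ∀ n m, n ≤ 2 ^ e → m ≤ 2 ^ e → bI k A (∑ i, X i) ⊔ (Ideal.span {X i ^ n} ⊔ Ideal.span {X j ^ m}) =
      bI k (Function.update (Function.update a i n) j m) (∑ i, X i) := by
    intro n m hn hm
    rw [← sup_assoc, bI_sup A _ i n (by rw [hAi]; exact hn), bI_sup _ _ j m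
      (by rw [Function.update_of_ne hij.symm, hAj]; exact hm), e1, Function.update_idem]
  rw [← hsup n m hn hm, ← hsup _ _ (Nat.sub_le _ n) (Nat.sub_le _ m)]
  apply linkage'
  · rw [← hAi]; exact bI_X _ _ _
  · rw [← hAj]; exact bI_X _ _ _
  · intro n hn
    rw [bI_sup A _ i n (by rw [hAi]; exact hn), elimDim e _ _ j, e1, Function.update_idem]
    · have := prod_upd2 a (fun x => x) i j hij n 1
      rw [this, hc]; ring
    · rw [Function.update_of_ne hij.symm, hAj]
    · intro s
      by_cases hs : s = i
      · rw [hs, Function.update_self]; exact hn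
      · rw [Function.update_of_ne hs]; exact hle s
  · intro n hn
    rw [bI_sup A _ j n (by rw [hAj]; exact hn), elimDim e _ _ i, e2, Function.update_comm hij.symm, Function.update_idem]
    · have := prod_upd2 a (fun x => x) i j hij 1 n
      rw [Function.update_comm hij] at *
      rw [this, hc]; ring
    · rw [Function.update_of_ne hij, hAi]
    · intro s
      by_cases hs : s = j
      · rw [hs, Function.update_self]; exact hn
      · rw [Function.update_of_ne hs]; exact hle s
  · exact hn
  · exact hm

lemma dropDim {k : Type*} [Field k] [CharP k 2] {ι : Type*} [Fintype ι] [DecidableEq ι]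
    (e : ℕ) (a : ι → ℕ) (i : ι) (ha : ∀ s, s ≠ i → a s ≤ 2 ^ e) (hi : 2 ^ e ≤ a i) :
    bI k a (∑ i, X i) = bI k (Function.update a i (2 ^ e)) (∑ i, X i) := by
  have : ExpChar (MvPolynomial ι k) 2 := ExpChar.prime Nat.prime_two
  rw [← bI_sup _ _ i _ hi, eq_comm, sup_eq_left, Ideal.span_singleton_le_iff_mem]
  have h1 : (X i : MvPolynomial ι k) ^ 2 ^ e =
      (∑ s, X s) ^ 2 ^ e - ∑ s ∈ Finset.univ.erase i, X s ^ 2 ^ e := by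
    rw [sum_pow_char_pow, ← Finset.add_sum_erase _ _ (Finset.mem_univ i)]
    ring
  rw [h1]
  refine sub_mem (Ideal.pow_mem_of_mem _ (bI_f _ _) _ (by positivity)) (sum_mem fun s hs => ?_)
  exact Ideal.mem_of_dvd _ (pow_dvd_pow _ (ha s (Finset.ne_of_mem_erase hs))) (bI_X _ _ _)

theorem Dthm {k : Type*} [Field k] [CharP k 2] {ι : Type*} [Fintype ι] [DecidableEq ι]
    (e : ℕ) (a : ι → ℕ) (ha : ∀ i, a i ≤ 2 ^ e) :
    (Module.finrank k (MvPolynomial ι k ⧸ bI k a (∑ i, X i)) : ℤ) * 2 ^ e =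
      ∑ r ∈ (Finset.range e).powerset, ∏ i, Sc r (a i) := by
  induction e generalizing a with
  | zero =>
    simp only [pow_zero, mul_one, Finset.range_zero, Finset.powerset_empty, Finset.sum_singleton,
      Sc_empty]
    rw [← Nat.cast_prod, ← monoDim (k := k)]
    have : bI k a (∑ i, X i) = bI k a 0 := by
      apply le_antisymm
      · apply Ideal.span_le.2
        rintro x (⟨s, rfl⟩ | rfl)
        · exact bI_X _ _ _
        · refine sum_mem fun s _ => ?_
          have h := ha s
          have := Ideal.mem_of_dvd _ (pow_dvd_pow _ h) (bI_X (k := k) a 0 s)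
          simpa using this
      · apply Ideal.span_le.2
        rintro x (⟨s, rfl⟩ | rfl)
        · exact bI_X _ _ _
        · exact zero_mem _
    rw [this]
  | succ e ih =>
    have pw : 2 ^ (e + 1) = 2 ^ e + 2 ^ e := by ring
    have h2e : 0 < 2 ^ e := Nat.two_pow_pos e
    have case0 : ∀ a : ι → ℕ, (∀ i, a i ≤ 2 ^ e) →
        (Module.finrank k (MvPolynomial ι k ⧸ bI k a (∑ i, X i)) : ℤ) * 2 ^ (e + 1) =
          ∑ r ∈ (Finset.range (e + 1)).powerset, ∏ i, Sc r (a i) := by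
      intro a ha
      rw [pow_sum_succ, pow_succ, ← mul_assoc, ih a ha, Finset.sum_mul]
      refine Finset.sum_congr rfl fun r hr => ?_
      rw [Finset.mem_powerset] at hr
      rw [mul_two]
      congr 1
      exact Finset.prod_congr rfl fun i _ => (Sc_insert_le e r hr _ (ha i)).symm
    -- induction on the number of large entries
    suffices H : ∀ N : ℕ, ∀ a : ι → ℕ, (∀ i, a i ≤ 2 ^ (e + 1)) →
        (Finset.univ.filter fun i => 2 ^ e < a i).card = N →
        (Module.finrank k (MvPolynomial ι k ⧸ bI k a (∑ i, X i)) : ℤ) * 2 ^ (e + 1) =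
          ∑ r ∈ (Finset.range (e + 1)).powerset, ∏ i, Sc r (a i) from H _ a ha rfl
    intro N
    induction N using Nat.strong_induction_on with
    | _ N IH =>
    intro a ha hN
    by_cases h0 : ∀ i, a i ≤ 2 ^ e
    · exact case0 a h0
    push Not at h0
    obtain ⟨i, hi⟩ := h0
    by_cases h1 : ∀ s, s ≠ i → a s ≤ 2 ^ e
    · rw [dropDim e a i h1 hi.le, case0]
      · rw [pow_sum_succ, pow_sum_succ]
        refine Finset.sum_congr rfl fun r hr => ?_
        rw [Finset.mem_powerset] at hr
        have P : ∀ f : ι → ℕ, ∀ r, ∏ s, Sc r (f s) = Sc r (f i) * ∏ s ∈ Finset.univ.erase i, Sc r (f s) :=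
          fun f r => (Finset.mul_prod_erase _ _ (Finset.mem_univ i)).symm
        rw [P, P, P a, P a, Function.update_self]
        have q1 : ∀ r, ∏ s ∈ Finset.univ.erase i, Sc r (Function.update a i (2 ^ e) s) =
            ∏ s ∈ Finset.univ.erase i, Sc r (a s) := fun r =>
          Finset.prod_congr rfl fun s hs => by rw [Function.update_of_ne (Finset.ne_of_mem_erase hs)]
        have q2 : ∏ s ∈ Finset.univ.erase i, Sc (insert e r) (a s) =
            ∏ s ∈ Finset.univ.erase i, Sc r (a s) :=
          Finset.prod_congr rfl fun s hs => Sc_insert_le e r hr _ (h1 s (Finset.ne_of_mem_erase hs))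
        rw [q1, q1, q2, Sc_insert_le e r hr _ le_rfl]
        obtain ⟨t, ht⟩ := Nat.exists_eq_add_of_le hi.le
        have := ha i
        rw [ht, Sc_add e r hr, Sc_insert_add e r hr _ (by omega)]
        ring
      · intro s
        by_cases hs : s = i
        · rw [hs, Function.update_self]
        · rw [Function.update_of_ne hs]; exact h1 s hs
    · push Not at h1
      obtain ⟨j, hji, hj⟩ := h1
      have hij : i ≠ j := hji.symm
      have haa : Function.update (Function.update a i (a i)) j (a j) = a := by simp
      have F := flipDim (k := k) (e + 1) a ha i j hij (a i) (a j) (ha i) (ha j) _ rfl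
      rw [haa] at F
      set A := Function.update (Function.update a i (2 ^ (e + 1) - a i)) j (2 ^ (e + 1) - a j) with hA
      have hAi : A i = 2 ^ (e + 1) - a i := by rw [hA, Function.update_of_ne hij, Function.update_self]
      have hAj : A j = 2 ^ (e + 1) - a j := by rw [hA, Function.update_self]
      have hAs : ∀ s, s ≠ i → s ≠ j → A s = a s := fun s h1 h2 => by
        rw [hA, Function.update_of_ne h2, Function.update_of_ne h1]
      have := IH _ ?_ A ?_ rfl
      · have C := congrArg (Nat.cast (R := ℤ)) F
        push_cast at C
        rw [← Finset.add_sum_erase _ _ (Finset.empty_mem_powerset (Finset.range (e + 1)))] at this ⊢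
        have E : ∀ r ∈ (Finset.range (e + 1)).powerset.erase ∅, ∏ i, Sc r (A i) = ∏ i, Sc r (a i) := by
          intro r hr
          simp only [Finset.mem_erase, Finset.mem_powerset] at hr
          have p1 := prod_upd2 a (Sc r) i j hij (2 ^ (e + 1) - a i) (2 ^ (e + 1) - a j)
          have p2 := prod_upd2 a (Sc r) i j hij (a i) (a j)
          rw [haa] at p2
          rw [hA, p1, p2, Sc_flip2 (e + 1) r hr.2 hr.1 _ _ (ha i) (ha j)]
        rw [Finset.sum_congr rfl E] at this
        have p1 := prod_upd2 a (Sc ∅) i j hij (2 ^ (e + 1) - a i) (2 ^ (e + 1) - a j)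
        have p2 := prod_upd2 a (Sc ∅) i j hij (a i) (a j)
        rw [haa] at p2
        rw [← hA] at p1
        rw [p1] at this
        rw [p2]
        simp only [Sc_empty] at this ⊢
        rw [Nat.cast_sub (ha i), Nat.cast_sub (ha j)] at this
        push_cast at this
        linear_combination 2 ^ (e + 1) * C + this
      · rw [← hN]
        apply Finset.card_lt_card
        rw [Finset.ssubset_iff_of_subset]
        · refine ⟨i, by simpa using hi, ?_⟩
          simp only [Finset.mem_filter, Finset.mem_univ, true_and]
          rw [hAi]; clear F; omega
        · intro s
          simp only [Finset.mem_filter, Finset.mem_univ, true_and]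
          intro h
          by_cases h1 : s = i
          · rw [h1]; exact hi
          · by_cases h2 : s = j
            · rw [h2]; exact hj
            · rwa [hAs s h1 h2] at h
      · intro s
        by_cases h1 : s = i
        · rw [h1, hAi]; omega
        · by_cases h2 : s = j
          · rw [h2, hAj]; exact Nat.sub_le _ _
          · rw [hAs s h1 h2]; exact ha s


lemma cellSum (e : ℕ) (r : Finset ℕ) :
    ∑ z : Fin (2 * 2 ^ e - 1), Sc r (2 ^ e - (z - (2 ^ e - 1)) - ((2 ^ e - 1) - z)) = Fc e r := by
  obtain ⟨n, hn⟩ : ∃ n, 2 ^ e = n + 1 := ⟨2 ^ e - 1, by have := Nat.two_pow_pos e; omega⟩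
  rw [Fc, hn, Fin.sum_univ_eq_sum_range
    (fun z => Sc r (n + 1 - (z - (n + 1 - 1)) - ((n + 1 - 1) - z)))]
  have h : 2 * (n + 1) - 1 = n + (n + 1) := by omega
  rw [h, Finset.sum_range_add]
  have a1 : ∑ x ∈ Finset.range n, Sc r (n + 1 - (x - (n + 1 - 1)) - ((n + 1 - 1) - x)) =
      ∑ x ∈ Finset.range n, Sc r (x + 1) := by
    refine Finset.sum_congr rfl fun x hx => ?_
    rw [Finset.mem_range] at hx
    congr 1
    omega
  have a2 : ∑ x ∈ Finset.range (n + 1), Sc r (n + 1 - (n + x - (n + 1 - 1)) - ((n + 1 - 1) - (n + x))) =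
      ∑ x ∈ Finset.range (n + 1), Sc r (x + 1) := by
    rw [← Finset.sum_range_reflect]
    refine Finset.sum_congr rfl fun x hx => ?_
    rw [Finset.mem_range] at hx
    congr 1
    omega
  have a3 := Finset.sum_range_succ' (Sc r) n
  have a4 := Finset.sum_range_succ (fun x => Sc r (x + 1)) n
  rw [Sc_zero] at a3
  rw [a1, a2]
  linarith

theorem Gthm {k : Type*} [Field k] [CharP k 2] (A B : Type*) [Fintype A] [Fintype B]
    [DecidableEq A] [DecidableEq B] (e : ℕ) :
    (Module.finrank k (MvPolynomial ((A ⊕ A) ⊕ B) k ⧸ bI k (fun _ => 2 ^ (e + 1))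
      ((∑ a : A, X (Sum.inl (Sum.inl a)) * X (Sum.inl (Sum.inr a))) +
        ∑ b : B, X (Sum.inr b) ^ 2)) : ℤ) * 2 ^ (e + 1) =
      ∑ r ∈ (Finset.range (e + 1)).powerset,
        Fc (e + 1) r ^ Fintype.card A * (2 * Sc r (2 ^ e)) ^ Fintype.card B := by
  have h2e : 0 < 2 ^ e := Nat.two_pow_pos e
  have pw : 2 ^ (e + 1) = 2 * 2 ^ e := by ring
  set q := 2 ^ (e + 1) with hq
  set h := 2 ^ e with hh
  let L : (A ⊕ B →₀ ℕ) →+ ((A ⊕ A) ⊕ B →₀ ℕ) :=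
    { toFun := fun p => Finsupp.equivFunOnFinite.symm
        (Sum.elim (Sum.elim (fun a => p (Sum.inl a)) (fun a => p (Sum.inl a)))
          (fun b => 2 * p (Sum.inr b)))
      map_zero' := by
        ext ((s | s) | s) <;> simp
      map_add' := by
        intro x y
        ext ((s | s) | s) <;> simp [mul_add] }
  let len : (A → Fin (2 * q - 1)) × (B → Fin 2) → A ⊕ B → ℕ := fun c =>
    Sum.elim (fun a => q - (c.1 a - (q - 1)) - ((q - 1) - c.1 a)) (fun b => h)
  have hd := decomp (k := k) (fun _ : (A ⊕ A) ⊕ B => q) L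
    (fun c : (A → Fin (2 * q - 1)) × (B → Fin 2) => Finsupp.equivFunOnFinite.symm
      (Sum.elim (Sum.elim (fun a => (c.1 a : ℕ) - (q - 1)) (fun a => (q - 1) - (c.1 a : ℕ)))
        (fun b => (c.2 b : ℕ)))) len
    (fun u => (fun a => ⟨min (u (Sum.inl (Sum.inl a)) + (q - 1) - u (Sum.inl (Sum.inr a)))
        (2 * q - 2), by omega⟩,
      fun b => ⟨u (Sum.inr b) % 2, by omega⟩))
    (fun u => Finsupp.equivFunOnFinite.symm
      (Sum.elim (fun a => min (u (Sum.inl (Sum.inl a))) (u (Sum.inl (Sum.inr a))))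
        (fun b => u (Sum.inr b) / 2)))
    (by
      intro u hu
      ext ((s | s) | s)
      · have i1 := hu (Sum.inl (Sum.inl s))
        have i2 := hu (Sum.inl (Sum.inr s))
        simp [L]
        omega
      · have i1 := hu (Sum.inl (Sum.inl s))
        have i2 := hu (Sum.inl (Sum.inr s))
        simp [L]
        omega
      · simp [L]
        omega)
    (by
      intro c p
      constructor
      · rintro H (a | b)
        · have i1 := H (Sum.inl (Sum.inl a))
          have i2 := H (Sum.inl (Sum.inr a))
          simp [L, len] at i1 i2 ⊢
          omega
        · have i1 := H (Sum.inr b)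
          simp [L, len] at i1 ⊢
          omega
      · rintro H ((a | a) | b)
        · have i1 := H (Sum.inl a)
          simp [L, len] at i1 ⊢
          omega
        · have i1 := H (Sum.inl a)
          simp [L, len] at i1 ⊢
          omega
        · have i1 := H (Sum.inr b)
          have := (c.2 b).2
          simp [L, len] at i1 ⊢
          omega)
    (by
      intro c p H
      constructor
      · refine Prod.ext ?_ ?_
        · funext a
          have i1 := H (Sum.inl a)
          have := (c.1 a).2
          ext
          simp [L, len] at i1 ⊢
          omega
        · funext b
          have := (c.2 b).2
          ext
          simp [L, len]
          omega
      · ext (a | b)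
        · have i1 := H (Sum.inl a)
          have := (c.1 a).2
          simp [L, len] at i1 ⊢
          omega
        · have := (c.2 b).2
          simp [L, len]
          omega)
  have hf : (∑ i, monomial (L (Finsupp.single i 1)) (1 : k)) =
      ((∑ a : A, X (Sum.inl (Sum.inl a)) * X (Sum.inl (Sum.inr a))) +
        ∑ b : B, X (Sum.inr b) ^ 2) := by
    rw [Fintype.sum_sum_type]
    congr 1
    · refine Finset.sum_congr rfl fun a _ => ?_
      rw [X, X, monomial_mul, mul_one]
      congr 2
      ext ((s | s) | s) <;> simp [L, Finsupp.single_apply]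
    · refine Finset.sum_congr rfl fun a _ => ?_
      rw [X_pow_eq_monomial]
      congr 2
      ext ((s | s) | s) <;> simp [L, Finsupp.single_apply]
  rw [hf] at hd
  rw [hd]
  push_cast
  rw [Finset.sum_mul]
  have hD : ∀ c, (Module.finrank k (MvPolynomial (A ⊕ B) k ⧸ bI k (len c) (∑ i, X i)) : ℤ) * 2 ^ (e + 1) =
      ∑ r ∈ (Finset.range (e + 1)).powerset, ∏ i, Sc r (len c i) := by
    intro c
    apply Dthm
    rintro (a | b)
    · simp [len]; omega
    · simp [len]; omega
  rw [Finset.sum_congr rfl fun c _ => hD c, Finset.sum_comm]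
  refine Finset.sum_congr rfl fun r _ => ?_
  simp only [Fintype.prod_sum_type, len, Sum.elim_inl, Sum.elim_inr, Finset.prod_const,
    Finset.card_univ]
  rw [Fintype.sum_prod_type]
  simp only [Finset.sum_const, Finset.card_univ, Fintype.card_fun, Fintype.card_fin]
  rw [mul_pow, ← cellSum, ← hq, ← Finset.card_univ (α := A), ← Finset.prod_const,
    Finset.prod_univ_sum, Finset.sum_mul, Fintype.piFinset_univ]
  refine Finset.sum_congr rfl fun c _ => ?_
  rw [nsmul_eq_mul]
  push_cast
  ring

lemma bI_rename {k : Type*} [Field k] {σ τ : Type*} (φ : σ ≃ τ) (q : ℕ) (f : MvPolynomial σ k) :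
    Module.finrank k (MvPolynomial τ k ⧸ bI k (fun _ => q) (rename φ f)) =
      Module.finrank k (MvPolynomial σ k ⧸ bI k (fun _ => q) f) := by
  have hG : bI k (fun _ => q) (rename φ f) =
      (bI k (fun _ => q) f).map (renameEquiv k φ : MvPolynomial σ k →+* MvPolynomial τ k) := by
    rw [bI, bI, Ideal.map_span, Set.image_union, Set.image_singleton, ← Set.range_comp]
    congr 2
    ext x
    constructor
    · rintro ⟨i, rfl⟩
      exact ⟨φ.symm i, by simp⟩
    · rintro ⟨i, rfl⟩
      exact ⟨φ i, by simp⟩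
  exact ((Ideal.quotientEquivAlg _ _ (renameEquiv k φ) hG).toLinearEquiv.finrank_eq).symm

lemma HK_formula {k : Type*} [Field k] [CharP k 2] (d n : ℕ) (hn : 2 * ((d + 1) / 2) + n = d + 1)
    (e : ℕ) :
    (HKfun k (d + 1) 2 (e + 1) (A1poly k d) : ℤ) * 2 ^ (e + 1) =
      ∑ r ∈ (Finset.range (e + 1)).powerset,
        Fc (e + 1) r ^ ((d + 1) / 2) * (2 * Sc r (2 ^ e)) ^ n := by
  have hG := Gthm (k := k) (Fin ((d + 1) / 2)) (Fin n) e
  rw [Fintype.card_fin, Fintype.card_fin] at hG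
  rw [← hG]
  let φ₀ : (Fin ((d + 1) / 2) ⊕ Fin ((d + 1) / 2)) ⊕ Fin n → Fin (d + 1) :=
    Sum.elim (Sum.elim (fun i => ⟨2 * i, by omega⟩) (fun i => ⟨2 * i + 1, by omega⟩))
      (fun _ => ⟨d, by omega⟩)
  have hφ : Function.Bijective φ₀ := by
    rw [Fintype.bijective_iff_injective_and_card]
    constructor
    · rintro ((i | i) | i) ((j | j) | j) hij <;> have hi2 := i.2 <;> have hj2 := j.2 <;>
        simp only [φ₀, Sum.elim_inl, Sum.elim_inr, Fin.mk.injEq] at hij <;> simp <;>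
        first
        | (ext; omega)
        | omega
    · simp
      omega
  let φ := Equiv.ofBijective φ₀ hφ
  rw [← bI_rename φ]
  have : rename φ ((∑ a : Fin ((d + 1) / 2), X (Sum.inl (Sum.inl a)) * X (Sum.inl (Sum.inr a))) +
        ∑ b : Fin n, X (Sum.inr b) ^ 2) = A1poly k d := by
    simp only [map_add, map_sum, map_mul, map_pow, rename_X, A1poly]
    congr 1
    by_cases hE : Even d
    · obtain ⟨c, hc⟩ := hE
      have : n = 1 := by omega
      subst this
      rw [if_pos ⟨c, hc⟩]
      simp [φ, φ₀]
    · rw [if_neg hE]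
      rw [Nat.not_even_iff_odd] at hE
      obtain ⟨c, hc⟩ := hE
      have : n = 0 := by omega
      subst this
      simp
  rw [this]
  rfl

lemma limOdd (m : ℕ) (hm : 1 ≤ m) (z : ℕ → ℝ) (hz : ∀ e, z (e + 1) = z e / 2 ^ m + 1) :
    Filter.Tendsto z Filter.atTop (nhds (2 ^ m / (2 ^ m - 1))) := by
  have h2 : (2 : ℝ) ≤ 2 ^ m := by
    calc (2 : ℝ) = 2 ^ 1 := by norm_num
      _ ≤ 2 ^ m := pow_le_pow_right₀ (by norm_num) hm
  set t : ℝ := 2 ^ m with ht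
  have h1 : t - 1 ≠ 0 := by linarith
  have h0 : t ≠ 0 := by linarith
  have key : ∀ e, z e = t / (t - 1) + (z 0 - t / (t - 1)) * (1 / t) ^ e := by
    intro e
    induction e with
    | zero => simp
    | succ e ih =>
      rw [hz, ih, pow_succ]
      field_simp
      ring
  have hl : Filter.Tendsto (fun e : ℕ => (1 / t) ^ e) Filter.atTop (nhds 0) := by
    apply tendsto_pow_atTop_nhds_zero_of_lt_one
    · positivity
    · rw [div_lt_one (by linarith)]; linarith
  have := (hl.const_mul (z 0 - t / (t - 1))).const_add (t / (t - 1))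
  rw [mul_zero, add_zero] at this
  exact this.congr fun e => (key e).symm


/-- The Hilbert–Kunz multiplicity of the `A₁` singularity in characteristic 2 exists
and equals `2^m/(2^m − 1)` if `d = 2m − 1` is odd, and `(2^m + 1)/2^m` if `d = 2m` is even. -/
theorem eHK_A1_char_two (k : Type*) [Field k] [CharP k 2] (d : ℕ) (hd : 1 ≤ d) :
    ∃ L : ℝ,
      Filter.Tendsto
        (fun e : ℕ => (HKfun k (d + 1) 2 e (A1poly k d) : ℝ) / 2 ^ (d * e))
        Filter.atTop (nhds L) ∧
      (∀ m : ℕ, d = 2 * m - 1 → L = 2 ^ m / (2 ^ m - 1)) ∧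
      (∀ m : ℕ, d = 2 * m → L = (2 ^ m + 1) / 2 ^ m) := by
  rcases Nat.even_or_odd' d with ⟨m, rfl | rfl⟩
  · refine ⟨(2 ^ m + 1) / 2 ^ m, ?_, fun m' h => by omega, fun m' h => ?_⟩
    · rw [← Filter.tendsto_add_atTop_iff_nat 1]
      refine Filter.Tendsto.congr (fun e => ?_) tendsto_const_nhds
      have H := HK_formula (k := k) (2 * m) 1 (by omega) e
      have hm : (2 * m + 1) / 2 = m := by omega
      rw [hm] at H
      simp only [pow_one] at H
      rw [Zc_even] at H
      have H' := congrArg (Int.cast (R := ℝ)) H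
      push_cast at H'
      have hp : (0 : ℝ) < 2 ^ (e + 1) := by positivity
      have H2 : (HKfun k (2 * m + 1) 2 (e + 1) (A1poly k (2 * m)) : ℝ) =
          4 ^ ((e + 1) * m) + 2 ^ m * 4 ^ (e * m) := by
        apply mul_right_cancel₀ hp.ne'
        rw [H']; ring
      rw [H2, div_eq_div_iff (by positivity) (by positivity)]
      have h4 : (4 : ℝ) = 2 ^ 2 := by norm_num
      rw [h4, ← pow_mul, ← pow_mul]
      ring
    · have : m' = m := by omega
      rw [this]
  · refine ⟨2 ^ (m + 1) / (2 ^ (m + 1) - 1), ?_, fun m' h => ?_, fun m' h => by omega⟩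
    · let z : ℕ → ℝ := fun e =>
        ((∑ r ∈ (Finset.range e).powerset, Fc e r ^ (m + 1) : ℤ) : ℝ) / 4 ^ ((m + 1) * e)
      have hz := limOdd (m + 1) (by omega) z (by
        intro e
        have H' := congrArg (Int.cast (R := ℝ)) (Zc_succ (m + 1) e (by omega))
        simp only [z]
        rw [H']
        rw [Int.cast_add, Int.cast_mul, Int.cast_pow, Int.cast_pow]
        rw [add_div]
        congr 1
        · have h4 : (4 : ℝ) ^ ((m + 1) * (e + 1)) = 4 ^ ((m + 1) * e) * (2 ^ (m + 1) * 2 ^ (m + 1)) := by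
            rw [mul_add, pow_add, ← mul_pow]; norm_num
          rw [h4, div_div, div_eq_div_iff (by positivity) (by positivity)]
          push_cast
          ring
        · push_cast
          exact div_self (by positivity))
      rw [← Filter.tendsto_add_atTop_iff_nat 1] at hz ⊢
      refine hz.congr fun e => ?_
      have H := HK_formula (k := k) (2 * m + 1) 0 (by omega) e
      have hm : (2 * m + 1 + 1) / 2 = m + 1 := by omega
      rw [hm] at H
      simp only [pow_zero, mul_one] at H
      simp only [z]
      rw [← H, div_eq_div_iff (by positivity) (by positivity)]
      have h4 : (4 : ℝ) = 2 ^ 2 := by norm_num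
      rw [h4, ← pow_mul]
      push_cast
      ring
    · have : m' = m + 1 := by omega
      rw [this]
end
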